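/- Let 𝒪 ⊆ ℝ^d be open, T > 0, ρ > 0, and let 𝓗 : ℝ^d × ℝ^d × M_d(ℝ) → ℝ be continuous and nonincreasing in its third variable with respect to the Loewner order. Assume Assumption A.1: there exists α > 0 such that liminf_{η↓0}(𝓗(y,q,Y^η) − 𝓗(x,p,X^η)) ≤ α(|x−y|(1+|q|+n²|x−y|) + (1+|x|)|p−q| + (1+|x|²)|Q|) for all x,y ∈ cl(𝒪) with |x−y| ≤ 1, all p,q ∈ ℝ^d, Q ∈ M_{2d}(ℝ), all families (X^η,Y^η)_{η>0} of d×d matrices and all n ≥ 1 such that the block matrix diag(X^η, −Y^η) ≤ A_n + ηA_n² in the Loewner order for all η > 0, where A_n := n²[[I_d, −I_d],[−I_d, I_d]] + Q. Let w₁ : [0,T]×cl(𝒪) → ℝ be an upper semicontinuous viscosity subsolution on cl(𝒪) of ρφ − ∂_t φ + 𝓗(·, Dφ, D²φ) = 0, let w₂ : [0,T]×cl(𝒪) → ℝ be lower semicontinuous and a viscosity supersolution on 𝒪 of the same equation, suppose w₁ and w₂ have polynomial growth on [0,T]×cl(𝒪), and suppose w₂ is of class 𝓡(𝒪). If w₂(T,x)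 ≥ w₁(T,x) for all x ∈ cl(𝒪), then w₂ ≥ w₁ on all of [0,T]×cl(𝒪). -/

import Mathlib

open Set Filter Asymptotics

attribute [local instance] Matrix.normedAddCommGroup

noncomputable section

/-- Test functions for the parabolic equation: `φ` is continuously differentiable in `t` and
twice continuously differentiable in `x`, with time derivative `φt`, spatial gradient `Dφ`
and spatial Hessian matrix `D2φ`, all jointly continuous. -/
def IsC12 (d : ℕ) (φ φt : ℝ → EuclideanSpace ℝ (Fin d) → ℝ)
    (Dφ : ℝ → EuclideanSpace ℝ (Fin d) → EuclideanSpace ℝ (Fin d))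
    (D2φ : ℝ → EuclideanSpace ℝ (Fin d) → Matrix (Fin d) (Fin d) ℝ) : Prop :=
  (∀ t x, HasDerivAt (fun s => φ s x) (φt t x) t) ∧
  (∀ t x, HasGradientAt (fun y => φ t y) (Dφ t x) x) ∧
  (∀ t x, ∃ L2 : EuclideanSpace ℝ (Fin d) →L[ℝ] EuclideanSpace ℝ (Fin d),
    HasFDerivAt (fun y => Dφ t y) L2 x ∧
    ∀ (v : EuclideanSpace ℝ (Fin d)) (i : Fin d), L2 v i = ∑ j, D2φ t x i j * v j) ∧
  Continuous (fun z : ℝ × EuclideanSpace ℝ (Fin d) => φt z.1 z.2) ∧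
  Continuous (fun z : ℝ × EuclideanSpace ℝ (Fin d) => Dφ z.1 z.2) ∧
  Continuous (fun z : ℝ × EuclideanSpace ℝ (Fin d) => D2φ z.1 z.2)

/-- The matrix `A_n = n² [[I, −I], [−I, I]] + Q` appearing in Assumption A.1. -/
def An (d : ℕ) (n : ℝ) (Q : Matrix (Fin d ⊕ Fin d) (Fin d ⊕ Fin d) ℝ) :
    Matrix (Fin d ⊕ Fin d) (Fin d ⊕ Fin d) ℝ :=
  n ^ 2 • Matrix.fromBlocks (1 : Matrix (Fin d) (Fin d) ℝ) (-1) (-1) 1 + Q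

/-- **Assumption A.1** of the paper (structural condition on the operator `𝓗`); the Loewner
order `A ≤ B` is expressed as `(B − A).PosSemidef`, and the `liminf` is taken in the
extended reals. -/
def AssumptionA1 (d : ℕ) (𝒪 : Set (EuclideanSpace ℝ (Fin d)))
    (H : EuclideanSpace ℝ (Fin d) → EuclideanSpace ℝ (Fin d) →
      Matrix (Fin d) (Fin d) ℝ → ℝ) : Prop :=
  ∃ α > (0 : ℝ), ∀ x ∈ closure 𝒪, ∀ y ∈ closure 𝒪, ‖x - y‖ ≤ 1 →
    ∀ (p q : EuclideanSpace ℝ (Fin d)) (Q : Matrix (Fin d ⊕ Fin d) (Fin d ⊕ Fin d) ℝ)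
      (Xη Yη : ℝ → Matrix (Fin d) (Fin d) ℝ) (n : ℝ), 1 ≤ n →
      (∀ η > (0 : ℝ),
        (An d n Q + η • (An d n Q * An d n Q) -
          Matrix.fromBlocks (Xη η) 0 0 (-(Yη η))).PosSemidef) →
      liminf (fun η : ℝ => ((H y q (Yη η) - H x p (Xη η) : ℝ) : EReal))
          (nhdsWithin 0 (Ioi 0)) ≤
        ((α * (‖x - y‖ * (1 + ‖q‖ + n ^ 2 * ‖x - y‖) + (1 + ‖x‖) * ‖p - q‖ +
          (1 + ‖x‖ ^ 2) * ‖Q‖) : ℝ) : EReal)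

/-- A function `w : [0,T] × cl(𝒪) → ℝ` is of class `𝓡(𝒪)` (Definition A.1 / 4.6 of the
paper). -/
def ClassR (d : ℕ) (T : ℝ) (𝒪 : Set (EuclideanSpace ℝ (Fin d)))
    (w : ℝ → EuclideanSpace ℝ (Fin d) → ℝ) : Prop :=
  ∀ t ∈ Ico (0 : ℝ) T, ∀ x ∈ frontier 𝒪,
    ∃ r > (0 : ℝ), ∃ B : Set (EuclideanSpace ℝ (Fin d)), IsOpen B ∧ x ∈ B ∧
      ∃ ℓ : ℝ → EuclideanSpace ℝ (Fin d),
        -- (A.2): liminf_{ε→0} ε⁻¹ |ℓ(ε)| < ∞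
        (liminf (fun ε : ℝ => ENNReal.ofReal (ε⁻¹ * ‖ℓ ε‖)) (nhdsWithin 0 (Ioi 0)) < ⊤) ∧
        -- (A.3): y + ℓ(ε) + o(ε) ∈ 𝒪 for all y ∈ cl(𝒪) ∩ B and small ε > 0
        (∀ ψ : ℝ → EuclideanSpace ℝ (Fin d), ψ =o[nhdsWithin (0 : ℝ) (Ioi 0)] (fun ε => ε) →
          ∃ r' > (0 : ℝ), ∀ y ∈ closure 𝒪 ∩ B, ∀ ε ∈ Ioo (0 : ℝ) (min r r'),
            y + ℓ ε + ψ ε ∈ 𝒪) ∧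
        -- (A.4)–(A.5): continuity of `w` along the perturbation
        ∃ lam : ℝ → ℝ, (∀ ε > (0 : ℝ), 0 ≤ lam ε) ∧
          Tendsto lam (nhdsWithin 0 (Ioi 0)) (nhds 0) ∧
          Tendsto (fun ε => w (t + lam ε) (x + ℓ ε)) (nhdsWithin 0 (Ioi 0)) (nhds (w t x))

/-!
Suppose `w₁ - w₂` exceeds the barrier `β = δ e^{Λ(T - t)} (1 + ‖x‖²)^k` somewhere. By polynomial
growth `w₁ - w₂ - β` has a positive maximum, at some `z₀` before time `T`, and replacing `β` by a
quadratic polynomial that touches it from above at `z₀` makes the maximum strict. Now double the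
variables: with `e` the inward perturbation provided by the class `𝓡(𝒪)`, maximize
`w₁ z - w₂ z' - quadratic z - κ ‖z - z' + e ε‖² / (2 ε²)`. As `ε → 0` the maximizers satisfy
`z' = z + e ε + o(ε)`, so that the spatial part of `z'` lies in the open set `𝒪`, where `w₂` is
tested. The theorem on sums turns the maximum into a pair of limiting superjets whose space blocks
are admissible in Assumption A.1 with `n = √κ / ε`. Letting `ε → 0` and then `κ → 0` yields
`ρ (w₁ - w₂) + Λ β ≤ Λ β` at `z₀`, a contradiction, provided that `Λ` is chosen large enough for
`Λ β` to bound the contribution of the barrier to the right-hand side; finally `δ → 0`.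

The theorem on sums rests on Alexandrov's theorem for sup-convolutions. The resolvent
`J = (I + ∂F)⁻¹` of a convex function `F` is a contraction, hence differentiable almost everywhere
by Rademacher's theorem, and its differentiability at `ζ + q` with `q ∈ ∂F ζ` gives a second-order
expansion of `F` at `ζ`. The slopes by which `F` must be tilted for a bad contact point to occur lie
in the Lipschitz image of a null set, so that small good tilts exist.
-/

open scoped Topology InnerProductSpace NNReal Matrix

section QuadraticForms

variable {Z : Type*} [NormedAddCommGroup Z] [InnerProductSpace ℝ Z]

lemma inner_apply_self_le (A : Z →L[ℝ] Z) (x : Z) : ⟪A x, x⟫_ℝ ≤ ‖A‖ * ‖x‖ ^ 2 := by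
  calc ⟪A x, x⟫_ℝ ≤ ‖A x‖ * ‖x‖ := real_inner_le_norm _ _
    _ ≤ ‖A‖ * ‖x‖ * ‖x‖ := by gcongr; exact A.le_opNorm x
    _ = ‖A‖ * ‖x‖ ^ 2 := by ring

lemma norm_le_of_abs_inner_apply_self_le {A : Z →L[ℝ] Z} (hA : A.IsSymmetric) {c : ℝ} (hc : 0 ≤ c)
    (h : ∀ x, |⟪A x, x⟫_ℝ| ≤ c * ‖x‖ ^ 2) : ‖A‖ ≤ c := by
  rw [ContinuousLinearMap.norm_eq_iSup_rayleighQuotient A hA]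
  refine ciSup_le fun x => ?_
  rw [ContinuousLinearMap.rayleighQuotient, abs_div, abs_sq]
  exact div_le_of_le_mul₀ (sq_nonneg _) hc (h x)

lemma eq_zero_of_eventually_inner_le {d : Z} {c : ℝ}
    (h : ∀ᶠ k in 𝓝 (0 : Z), ⟪d, k⟫_ℝ ≤ c * ‖k‖ ^ 2) : d = 0 := by
  have hmax : IsLocalMax (fun k : Z => ⟪d, k⟫_ℝ - c * ‖k‖ ^ 2) 0 := by
    filter_upwards [h] with k hk
    simpa using hk
  have hderiv : HasFDerivAt (fun k : Z => ⟪d, k⟫_ℝ - c * ‖k‖ ^ 2)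
      (innerSL ℝ d - c • (2 • innerSL ℝ (0 : Z))) 0 :=
    (innerSL ℝ d).hasFDerivAt.sub ((hasStrictFDerivAt_norm_sq (0 : Z)).hasFDerivAt.const_mul c)
  simpa using DFunLike.congr_fun (hmax.hasFDerivAt_eq_zero hderiv) d

lemma inner_apply_self_nonpos_of_le_isLittleO {N : Z →L[ℝ] Z} {f : Z → ℝ}
    (hf : f =o[𝓝 0] fun h => ‖h‖ ^ 2) (hN : ∀ᶠ h in 𝓝 0, ⟪N h, h⟫_ℝ ≤ f h) (z : Z) :
    ⟪N z, z⟫_ℝ ≤ 0 := by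
  have htz : Tendsto (fun t : ℝ => t • z) (𝓝[>] 0) (𝓝 0) :=
    tendsto_nhdsWithin_of_tendsto_nhds
      (Continuous.tendsto' (by fun_prop) 0 0 (zero_smul ℝ z))
  have hO : (fun t : ℝ => ‖t • z‖ ^ 2) =O[𝓝[>] 0] fun t => t ^ 2 :=
    .of_bound (‖z‖ ^ 2) (.of_forall fun t => by simp [norm_smul, mul_pow, mul_comm])
  refine ge_of_tendsto ((hf.comp_tendsto htz).trans_isBigO hO).tendsto_div_nhds_zero ?_
  filter_upwards [htz.eventually hN, self_mem_nhdsWithin] with t ht (ht0 : 0 < t)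
  rw [map_smul, inner_smul_left, inner_smul_right, ← mul_assoc] at ht
  rw [le_div_iff₀ (by positivity)]
  simpa [sq, mul_comm] using ht

lemma abs_sub_le_of_forall_abs_sub_le {g : ℝ → ℝ} {A B : ℝ}
    (h : ∀ s t, 0 ≤ s → s ≤ t → t ≤ 1 → |g t - g s| ≤ (t - s) * (A + (t - s) * B)) :
    |g 1 - g 0| ≤ A := by
  have hN : ∀ N : ℕ, 0 < N → |g 1 - g 0| ≤ A + B / N := by
    intro N hN
    have hN' : (0 : ℝ) < N := mod_cast hN
    calc |g 1 - g 0| = |∑ i ∈ Finset.range N, (g ((i + 1 : ℕ) / N) - g (i / N))| := by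
          rw [Finset.sum_range_sub fun i : ℕ => g (i / N)]
          simp [hN'.ne']
      _ ≤ ∑ i ∈ Finset.range N, 1 / N * (A + 1 / N * B) := by
          refine (Finset.abs_sum_le_sum_abs _ _).trans (Finset.sum_le_sum fun i hi => ?_)
          have hstep : ((i + 1 : ℕ) / N : ℝ) - i / N = 1 / N := by push_cast; ring
          have := h (i / N) ((i + 1 : ℕ) / N) (by positivity) (by gcongr; omega)
            (by rw [div_le_one hN']; exact_mod_cast Finset.mem_range.mp hi)
          rwa [hstep] at this
      _ = A + B / N := by
          rw [Finset.sum_const, Finset.card_range, nsmul_eq_mul]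
          field_simp
  have hlim : Tendsto (fun N : ℕ => A + B / N) atTop (𝓝 A) := by
    simpa using tendsto_const_nhds.add (tendsto_const_div_atTop_nhds_zero_nat B)
  exact ge_of_tendsto hlim (eventually_gt_atTop 0 |>.mono hN)

lemma surjective_of_eventually_exists_norm_sub_le [FiniteDimensional ℝ Z] {D : Z →L[ℝ] Z}
    (h : ∀ᶠ x in 𝓝 (0 : Z), ∃ w, ‖x - D w‖ ≤ 1 / 2 * ‖x‖) : Function.Surjective D := by
  suffices hbot : (LinearMap.range (D : Z →ₗ[ℝ] Z))ᗮ = ⊥ from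
    LinearMap.range_eq_top.mp (Submodule.orthogonal_eq_bot_iff.mp hbot)
  refine (Submodule.eq_bot_iff _).mpr fun v hv => ?_
  have htv : Tendsto (fun t : ℝ => t • v) (𝓝[>] 0) (𝓝 0) :=
    tendsto_nhdsWithin_of_tendsto_nhds (Continuous.tendsto' (by fun_prop) 0 0 (zero_smul ℝ v))
  obtain ⟨t, ⟨w, hw⟩, ht : 0 < t⟩ := ((htv.eventually h).and self_mem_nhdsWithin).exists
  have horth : ⟪D w, t • v⟫_ℝ = 0 :=
    (Submodule.mem_orthogonal _ _).mp (Submodule.smul_mem _ t hv) _ ⟨w, rfl⟩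
  have hsq : ‖t • v‖ ^ 2 ≤ 1 / 2 * ‖t • v‖ ^ 2 := by
    calc ‖t • v‖ ^ 2 = ⟪t • v - D w, t • v⟫_ℝ := by
          rw [inner_sub_left, horth, real_inner_self_eq_norm_sq, sub_zero]
      _ ≤ ‖t • v - D w‖ * ‖t • v‖ := real_inner_le_norm _ _
      _ ≤ 1 / 2 * ‖t • v‖ * ‖t • v‖ := by gcongr
      _ = 1 / 2 * ‖t • v‖ ^ 2 := by ring
  have htv0 : t • v = 0 := norm_eq_zero.mp (pow_eq_zero_iff two_ne_zero |>.mp (by nlinarith))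
  exact (smul_eq_zero.mp htv0).resolve_left ht.ne'

end QuadraticForms

section Subgradients

variable {Z : Type*} [NormedAddCommGroup Z] [InnerProductSpace ℝ Z] {F : Z → ℝ} {q q' ζ : Z}
  {c : ℝ}

/-- `q` is a subgradient of `F` at `ζ` in the global sense of convex analysis: the affine function
with slope `q` through `(ζ, F ζ)` stays below `F` everywhere. -/
def HasSubgradientAt (F : Z → ℝ) (q ζ : Z) : Prop :=
  ∀ ξ, F ζ + ⟪q, ξ - ζ⟫_ℝ ≤ F ξ

/-- `F` has at `ζ` the second-order Taylor expansion with gradient `q` and Hessian `M`, in the sense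
of Alexandrov's theorem: nothing is said about derivatives at other points. -/
def HasSecondOrderExpansionAt (F : Z → ℝ) (q : Z) (M : Z →L[ℝ] Z) (ζ : Z) : Prop :=
  (fun h => F (ζ + h) - F ζ - ⟪q, h⟫_ℝ - 1 / 2 * ⟪M h, h⟫_ℝ) =o[𝓝 0] fun h => ‖h‖ ^ 2

namespace HasSubgradientAt

lemma add_inner_le (hq : HasSubgradientAt F q ζ) (h : Z) : F ζ + ⟪q, h⟫_ℝ ≤ F (ζ + h) := by
  simpa using hq (ζ + h)

lemma eq_of_eventually_le (hq' : HasSubgradientAt F q' ζ)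
    (hF : ∀ᶠ k in 𝓝 0, F (ζ + k) ≤ F ζ + ⟪q, k⟫_ℝ + c * ‖k‖ ^ 2) : q' = q := by
  refine sub_eq_zero.mp (eq_zero_of_eventually_inner_le (c := c) ?_)
  filter_upwards [hF] with k hk
  rw [inner_sub_left]
  linarith [hq'.add_inner_le k]

lemma norm_sub_le_norm_add_sub_add {ζ' : Z} (hq : HasSubgradientAt F q ζ)
    (hq' : HasSubgradientAt F q' ζ') : ‖ζ - ζ'‖ ≤ ‖(ζ + q) - (ζ' + q')‖ := by
  have hmono : 0 ≤ ⟪q - q', ζ - ζ'⟫_ℝ := by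
    have h₁ := hq ζ'
    have h₂ := hq' ζ
    rw [← neg_sub, inner_neg_right] at h₁
    rw [inner_sub_left]
    linarith
  refine le_of_sq_le_sq ?_ (norm_nonneg _)
  rw [add_sub_add_comm, norm_add_sq_real, real_inner_comm]
  nlinarith [sq_nonneg ‖q - q'‖]

lemma eventually_norm_sub_le (hq : HasSubgradientAt F q ζ) (hc : 0 ≤ c)
    (hF : ∀ᶠ k in 𝓝 0, F (ζ + k) ≤ F ζ + ⟪q, k⟫_ℝ + c * ‖k‖ ^ 2) :
    ∀ᶠ h in 𝓝 0, ∀ q', HasSubgradientAt F q' (ζ + h) → ‖q' - q‖ ≤ 4 * c * ‖h‖ := by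
  obtain ⟨r, hr, hFr⟩ := Metric.eventually_nhds_iff_ball.mp hF
  filter_upwards [Metric.ball_mem_nhds 0 (half_pos hr)] with h hh q' hq'
  rw [mem_ball_zero_iff] at hh
  rcases eq_or_ne h 0 with rfl | hh0
  · rw [add_zero] at hq'
    simp [hq'.eq_of_eventually_le hF]
  rcases eq_or_ne (q' - q) 0 with hd | hd
  · rw [hd, norm_zero]
    positivity
  have hh_pos := norm_pos_iff.mpr hh0
  have hd_pos := norm_pos_iff.mpr hd
  set k := (‖h‖ / ‖q' - q‖) • (q' - q) with hk_def
  have hk_norm : ‖k‖ = ‖h‖ := by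
    rw [hk_def, norm_smul, Real.norm_of_nonneg (by positivity), div_mul_cancel₀ _ hd_pos.ne']
  have hk_inner : ⟪q' - q, k⟫_ℝ = ‖h‖ * ‖q' - q‖ := by
    rw [hk_def, inner_smul_right, real_inner_self_eq_norm_sq]
    field_simp
  have hhk : ‖h + k‖ ≤ 2 * ‖h‖ := (norm_add_le h k).trans (by rw [hk_norm, two_mul])
  have hupper := hFr (h + k) (mem_ball_zero_iff.mpr (by linarith))
  have hlower := hq'.add_inner_le k
  rw [inner_sub_left] at hk_inner
  rw [inner_add_right] at hupper
  rw [add_assoc] at hlower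
  have hkey : ‖h‖ * ‖q' - q‖ ≤ ‖h‖ * (4 * c * ‖h‖) := by
    calc ‖h‖ * ‖q' - q‖ ≤ c * ‖h + k‖ ^ 2 := by linarith [hq.add_inner_le h]
      _ ≤ c * (2 * ‖h‖) ^ 2 := by gcongr
      _ = ‖h‖ * (4 * c * ‖h‖) := by ring
  exact le_of_mul_le_mul_left hkey hh_pos

end HasSubgradientAt

lemma continuous_of_bounded_hasSubgradientAt {L : ℝ}
    (hF : ∀ ζ, ∃ q, ‖q‖ ≤ L ∧ HasSubgradientAt F q ζ) : Continuous F := by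
  have hL : 0 ≤ L := (norm_nonneg _).trans (hF 0).choose_spec.1
  refine (LipschitzWith.of_le_add_mul ⟨L, hL⟩ fun ζ ξ => ?_).continuous
  obtain ⟨q, hqL, hq⟩ := hF ζ
  have hinner : ⟪q, ζ - ξ⟫_ℝ ≤ L * dist ζ ξ :=
    (real_inner_le_norm _ _).trans (by rw [dist_eq_norm]; gcongr)
  have hsub := hq ξ
  rw [← neg_sub, inner_neg_right] at hsub
  linarith! [hsub, hinner]

-- Along the segment from `ζ` to `ζ + h`, subgradients bound the increments of `F` on both sides.
lemma abs_sub_le_of_hasSubgradientAt_close {M : Z →L[ℝ] Z} {h : Z} {e : ℝ} (he : 0 ≤ e)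
    (hF : ∀ ζ, ∃ q, HasSubgradientAt F q ζ)
    (hclose : ∀ k, ‖k‖ ≤ ‖h‖ → ∀ q', HasSubgradientAt F q' (ζ + k) → ‖q' - q - M k‖ ≤ e * ‖k‖) :
    |F (ζ + h) - F ζ - ⟪q, h⟫_ℝ - 1 / 2 * ⟪M h, h⟫_ℝ| ≤ e * ‖h‖ ^ 2 := by
  choose Q hQ using fun t : ℝ => hF (ζ + t • h)
  set a := ⟪M h, h⟫_ℝ with ha
  set g : ℝ → ℝ := fun t => F (ζ + t • h) - t * ⟪q, h⟫_ℝ - t ^ 2 / 2 * a with hg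
  have hslope : ∀ t, 0 ≤ t → t ≤ 1 → |⟪Q t, h⟫_ℝ - ⟪q, h⟫_ℝ - t * a| ≤ e * ‖h‖ ^ 2 := by
    intro t ht0 ht1
    have hth : ‖t • h‖ ≤ ‖h‖ := by
      rw [norm_smul, Real.norm_of_nonneg ht0]
      exact mul_le_of_le_one_left (norm_nonneg h) ht1
    calc |⟪Q t, h⟫_ℝ - ⟪q, h⟫_ℝ - t * a| = |⟪Q t - q - M (t • h), h⟫_ℝ| := by
          simp only [inner_sub_left, map_smul, inner_smul_left, conj_trivial, ha]
      _ ≤ ‖Q t - q - M (t • h)‖ * ‖h‖ := abs_real_inner_le_norm _ _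
      _ ≤ e * ‖h‖ * ‖h‖ := by
          gcongr
          exact (hclose _ hth _ (hQ t)).trans (by gcongr)
      _ = e * ‖h‖ ^ 2 := by ring
  have hincr : ∀ s t, ⟪Q s, h⟫_ℝ * (t - s) ≤ F (ζ + t • h) - F (ζ + s • h) := by
    intro s t
    have := hQ s (ζ + t • h)
    rw [add_sub_add_left_eq_sub, ← sub_smul, inner_smul_right] at this
    linarith
  have hpart := abs_sub_le_of_forall_abs_sub_le (g := g) (A := e * ‖h‖ ^ 2) (B := |a| / 2) <| by
    intro s t hs hst ht
    have hs' := abs_le.mp (hslope s hs (hst.trans ht))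
    have ht' := abs_le.mp (hslope t (hs.trans hst) ht)
    have hst' := sub_nonneg.mpr hst
    have hsq := sq_nonneg (t - s)
    simp only [hg, abs_le]
    constructor
    · nlinarith [hincr s t, mul_le_mul_of_nonneg_left hs'.1 hst',
        mul_le_mul_of_nonneg_left (le_abs_self a) hsq]
    · nlinarith [hincr t s, mul_le_mul_of_nonneg_left ht'.2 hst',
        mul_le_mul_of_nonneg_left (le_abs_self a) hsq]
  have hends : g 1 - g 0 = F (ζ + h) - F ζ - ⟪q, h⟫_ℝ - 1 / 2 * a := by
    simp only [hg, one_smul, zero_smul, add_zero]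
    ring
  rwa [hends] at hpart

end Subgradients

section Resolvent

variable {Z : Type*} [NormedAddCommGroup Z] [InnerProductSpace ℝ Z] {F : Z → ℝ} {q ζ : Z}

-- The resolvent `(I + ∂F)⁻¹` is a contraction on its domain, by monotonicity of `∂F`.
lemma exists_lipschitzWith_resolvent [FiniteDimensional ℝ Z] (F : Z → ℝ) :
    ∃ (K : ℝ≥0) (J : Z → Z), LipschitzWith K J ∧
      ∀ ζ q, HasSubgradientAt F q ζ → J (ζ + q) = ζ := by
  let S := {x : Z × Z // HasSubgradientAt F x.2 x.1}
  let J₀ : Z → Z := Function.extend (fun x : S => x.1.1 + x.1.2) (fun x : S => x.1.1) 0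
  have hfactor : Function.FactorsThrough (fun x : S => x.1.1) fun x : S => x.1.1 + x.1.2 := by
    intro x y (hxy : x.1.1 + x.1.2 = y.1.1 + y.1.2)
    simpa [hxy, sub_eq_zero] using x.2.norm_sub_le_norm_add_sub_add y.2
  have hJ₀ : ∀ x : S, J₀ (x.1.1 + x.1.2) = x.1.1 := hfactor.extend_apply 0
  have hlip : LipschitzOnWith 1 J₀ (range fun x : S => x.1.1 + x.1.2) := by
    refine LipschitzOnWith.of_dist_le_mul ?_
    rintro _ ⟨x, rfl⟩ _ ⟨y, rfl⟩
    simpa only [hJ₀, dist_eq_norm, NNReal.coe_one, one_mul] using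
      x.2.norm_sub_le_norm_add_sub_add y.2
  obtain ⟨J, hJ, hJJ₀⟩ := hlip.extend_finite_dimension
  exact ⟨_, J, hJ, fun ζ q h => (hJJ₀ ⟨⟨(ζ, q), h⟩, rfl⟩).symm.trans (hJ₀ ⟨(ζ, q), h⟩)⟩

lemma exists_mem_ball_forall_differentiableAt [FiniteDimensional ℝ Z] {J Θ : Z → Z} {K K' : ℝ≥0}
    (hJ : LipschitzWith K J) (hΘ : LipschitzWith K' Θ) {δ : ℝ} (hδ : 0 < δ) :
    ∃ p ∈ Metric.ball (0 : Z) δ, ∀ w, Θ w = p → DifferentiableAt ℝ J w := by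
  borelize Z
  let μ : MeasureTheory.Measure Z := MeasureTheory.Measure.hausdorffMeasure (Module.finrank ℝ Z)
  have : μ.IsAddHaarMeasure := MeasureTheory.isAddHaarMeasure_hausdorffMeasure
  have hsing : μ {w | ¬ DifferentiableAt ℝ J w} = 0 :=
    MeasureTheory.ae_iff.mp hJ.ae_differentiableAt
  have himage : μ (Θ '' {w | ¬ DifferentiableAt ℝ J w}) = 0 := by
    refine le_antisymm ((hΘ.hausdorffMeasure_image_le (by positivity) _).trans ?_) zero_le
    rw [show MeasureTheory.Measure.hausdorffMeasure (Module.finrank ℝ Z : ℝ) = μ from rfl, hsing,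
      mul_zero]
  have hball : ¬ Metric.ball (0 : Z) δ ⊆ Θ '' {w | ¬ DifferentiableAt ℝ J w} := fun hsub =>
    (Metric.measure_ball_pos μ 0 hδ).ne' (MeasureTheory.measure_mono_null hsub himage)
  obtain ⟨p, hp, hp'⟩ := not_subset.mp hball
  exact ⟨p, hp, fun w hw => by_contra fun hn => hp' ⟨w, hn, hw⟩⟩

lemma eventually_norm_sub_fderiv_resolvent_le {J : Z → Z} {D : Z →L[ℝ] Z} {c e : ℝ}
    (hJ : ∀ ζ q, HasSubgradientAt F q ζ → J (ζ + q) = ζ) (hD : HasFDerivAt J D (ζ + q))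
    (hq : HasSubgradientAt F q ζ) (hc : 0 ≤ c)
    (hbound : ∀ᶠ h in 𝓝 0, ∀ q', HasSubgradientAt F q' (ζ + h) → ‖q' - q‖ ≤ c * ‖h‖)
    (he : 0 < e) :
    ∀ᶠ h in 𝓝 0, ∀ q', HasSubgradientAt F q' (ζ + h) → ‖h - D (h + (q' - q))‖ ≤ e * ‖h‖ := by
  obtain ⟨r, hr, hJr⟩ := Metric.eventually_nhds_iff_ball.mp <|
    (hasFDerivAt_iff_isLittleO_nhds_zero.mp hD).def (c := e / (1 + c)) (by positivity)
  filter_upwards [hbound, Metric.ball_mem_nhds 0 (show 0 < r / (1 + c) by positivity)]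
    with h hh hhr q' hq'
  rw [mem_ball_zero_iff, lt_div_iff₀ (by positivity)] at hhr
  have hnorm : ‖h + (q' - q)‖ ≤ (1 + c) * ‖h‖ := by
    linarith [norm_add_le h (q' - q), hh q' hq']
  have hest := hJr (h + (q' - q)) (mem_ball_zero_iff.mpr (by linarith))
  rw [show ζ + q + (h + (q' - q)) = ζ + h + q' by abel, hJ _ _ hq', hJ _ _ hq,
    add_sub_cancel_left] at hest
  calc ‖h - D (h + (q' - q))‖ ≤ e / (1 + c) * ‖h + (q' - q)‖ := hest
    _ ≤ e / (1 + c) * ((1 + c) * ‖h‖) := by gcongr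
    _ = e * ‖h‖ := by field_simp

lemma exists_hasSecondOrderExpansionAt_of_differentiableAt_resolvent [FiniteDimensional ℝ Z]
    {J : Z → Z} {c : ℝ} (hJ : ∀ ζ q, HasSubgradientAt F q ζ → J (ζ + q) = ζ)
    (hF : ∀ ζ, ∃ q, HasSubgradientAt F q ζ) (hq : HasSubgradientAt F q ζ) (hc : 0 ≤ c)
    (hupper : ∀ᶠ k in 𝓝 0, F (ζ + k) ≤ F ζ + ⟪q, k⟫_ℝ + c * ‖k‖ ^ 2)
    (hdiff : DifferentiableAt ℝ J (ζ + q)) :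
    ∃ M, HasSecondOrderExpansionAt F q M ζ := by
  obtain ⟨D, hD⟩ := hdiff
  have hest : ∀ e > 0, ∀ᶠ h in 𝓝 0, ∀ q', HasSubgradientAt F q' (ζ + h) →
      ‖h - D (h + (q' - q))‖ ≤ e * ‖h‖ := fun e he =>
    eventually_norm_sub_fderiv_resolvent_le hJ hD hq (by positivity)
      (hq.eventually_norm_sub_le hc hupper) he
  have hsurj : Function.Surjective D := surjective_of_eventually_exists_norm_sub_le <|
    (hest (1 / 2) one_half_pos).mono fun h hh =>
      ⟨_, hh _ (hF (ζ + h)).choose_spec⟩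
  have hinj : Function.Injective D :=
    (LinearMap.injective_iff_surjective (f := (D : Z →ₗ[ℝ] Z))).mpr hsurj
  obtain ⟨G, hGD⟩ : D.HasLeftInverse := .of_injective_of_finiteDimensional hinj
  refine ⟨G - .id ℝ Z, isLittleO_iff.mpr fun e he => ?_⟩
  obtain ⟨r, hr, hball⟩ := Metric.eventually_nhds_iff_ball.mp <|
    hest (e / (‖G‖ + 1)) (by positivity)
  filter_upwards [Metric.ball_mem_nhds 0 hr] with h hh
  rw [Real.norm_eq_abs, Real.norm_of_nonneg (sq_nonneg _)]
  refine abs_sub_le_of_hasSubgradientAt_close he.le hF fun k hk q' hq' => ?_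
  have hk' : k ∈ Metric.ball (0 : Z) r :=
    mem_ball_zero_iff.mpr (hk.trans_lt (mem_ball_zero_iff.mp hh))
  have hrewrite : q' - q - (G - .id ℝ Z) k = -G (k - D (k + (q' - q))) := by
    rw [map_sub, hGD, sub_apply, ContinuousLinearMap.id_apply]
    abel
  calc ‖q' - q - (G - .id ℝ Z) k‖ ≤ ‖G‖ * ‖k - D (k + (q' - q))‖ := by
        rw [hrewrite, norm_neg]
        exact G.le_opNorm _
    _ ≤ (‖G‖ + 1) * (e / (‖G‖ + 1) * ‖k‖) := by
        gcongr
        · linarith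
        · exact hball k hk' q' hq'
    _ = e * ‖k‖ := by field_simp

end Resolvent

section Alexandrov

variable {Z : Type*} [NormedAddCommGroup Z] [InnerProductSpace ℝ Z] {F : Z → ℝ} {q ζ : Z}
  {M C : Z →L[ℝ] Z}

namespace HasSecondOrderExpansionAt

lemma inner_nonneg (hF : HasSecondOrderExpansionAt F q M ζ) (hq : HasSubgradientAt F q ζ) (z : Z) :
    0 ≤ ⟪M z, z⟫_ℝ := by
  have hM : ⟪(-M) z, z⟫_ℝ ≤ 0 := by
    refine inner_apply_self_nonpos_of_le_isLittleO (hF.const_mul_left 2) (.of_forall fun h => ?_) z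
    rw [neg_apply, inner_neg_left]
    linarith [hq.add_inner_le h]
  simpa using hM

lemma inner_le (hF : HasSecondOrderExpansionAt F q M ζ)
    (hC : ∀ᶠ k in 𝓝 0, F (ζ + k) ≤ F ζ + ⟪q, k⟫_ℝ + 1 / 2 * ⟪C k, k⟫_ℝ) (z : Z) :
    ⟪M z, z⟫_ℝ ≤ ⟪C z, z⟫_ℝ := by
  have hMC : ⟪(M - C) z, z⟫_ℝ ≤ 0 := by
    refine inner_apply_self_nonpos_of_le_isLittleO (hF.const_mul_left (-2)) ?_ z
    filter_upwards [hC] with k hk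
    rw [sub_apply, inner_sub_left]
    linarith
  simpa [inner_sub_left] using hMC

lemma exists_isSymmetric [CompleteSpace Z] (hF : HasSecondOrderExpansionAt F q M ζ) :
    ∃ N : Z →L[ℝ] Z, N.IsSymmetric ∧ HasSecondOrderExpansionAt F q N ζ := by
  refine ⟨(1 / 2 : ℝ) • (M + M.adjoint), fun x y => ?_, ?_⟩
  · simp only [ContinuousLinearMap.coe_coe, smul_apply, add_apply, inner_smul_left,
      inner_smul_right, inner_add_left, inner_add_right, ContinuousLinearMap.adjoint_inner_left,
      ContinuousLinearMap.adjoint_inner_right, conj_trivial]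
    ring
  · have hquad : ∀ h, ⟪((1 / 2 : ℝ) • (M + M.adjoint)) h, h⟫_ℝ = ⟪M h, h⟫_ℝ := by
      intro h
      simp only [smul_apply, add_apply, inner_smul_left, inner_add_left,
        ContinuousLinearMap.adjoint_inner_left, conj_trivial]
      rw [real_inner_comm h (M h)]
      ring
    simpa only [HasSecondOrderExpansionAt, hquad] using hF

end HasSecondOrderExpansionAt

-- The touching point maximizes `F z - ⟪C z, z⟫ / 2 - ε ‖z‖ ^ 2 / 2 - ⟪p, z⟫` over a ball.
lemma exists_forall_le_tilted_quadratic [ProperSpace Z] (hcont : Continuous F) (hCs : C.IsSymmetric)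
    (hC : ∀ z, F z ≤ F 0 + 1 / 2 * ⟪C z, z⟫_ℝ) {ε r : ℝ} (hr : 0 < r) {p : Z}
    (hp : ‖p‖ < ε / 2 * r) :
    ∃ ζ, ‖ζ‖ < r ∧ ∀ᶠ k in 𝓝 0, F (ζ + k) ≤
      F ζ + ⟪(C + ε • .id ℝ Z) ζ + p, k⟫_ℝ + 1 / 2 * ⟪(C + ε • .id ℝ Z) k, k⟫_ℝ := by
  set C' : Z →L[ℝ] Z := C + ε • .id ℝ Z with hC'
  have hC's : C'.IsSymmetric := fun x y => by
    simp [hC', inner_add_left, inner_add_right, inner_smul_left, inner_smul_right,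
      show ⟪C x, y⟫_ℝ = ⟪x, C y⟫_ℝ from hCs x y]
  have hquad : ∀ z, ⟪C' z, z⟫_ℝ = ⟪C z, z⟫_ℝ + ε * ‖z‖ ^ 2 := fun z => by
    simp [hC', inner_add_left, inner_smul_left]
  obtain ⟨ζ, -, hmax⟩ := (isCompact_closedBall (0 : Z) r).exists_isMaxOn ⟨0, by simp [hr.le]⟩
    (f := fun z => F z - 1 / 2 * ⟪C' z, z⟫_ℝ - ⟪p, z⟫_ℝ) (by fun_prop)
  have hζ : ‖ζ‖ < r := by
    have hzero : F 0 ≤ F ζ - 1 / 2 * ⟪C' ζ, ζ⟫_ℝ - ⟪p, ζ⟫_ℝ := by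
      simpa using hmax (Metric.mem_closedBall_self hr.le)
    rw [hquad] at hzero
    have hbound : ε / 2 * ‖ζ‖ * ‖ζ‖ ≤ ‖p‖ * ‖ζ‖ := by
      nlinarith [hC ζ, neg_le_of_abs_le (abs_real_inner_le_norm p ζ)]
    by_contra! hge
    have hζ_pos : 0 < ‖ζ‖ := hr.trans_le hge
    have hε : 0 < ε / 2 := pos_of_mul_pos_left ((norm_nonneg p).trans_lt hp) hr.le
    exact absurd (le_of_mul_le_mul_right hbound hζ_pos)
      (not_le.mpr (hp.trans_le (by gcongr)))
  refine ⟨ζ, hζ, ?_⟩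
  filter_upwards [Metric.ball_mem_nhds 0 (sub_pos.mpr hζ)] with k hk
  rw [mem_ball_zero_iff] at hk
  have hle : F (ζ + k) - 1 / 2 * ⟪C' (ζ + k), ζ + k⟫_ℝ - ⟪p, ζ + k⟫_ℝ ≤
      F ζ - 1 / 2 * ⟪C' ζ, ζ⟫_ℝ - ⟪p, ζ⟫_ℝ :=
    hmax (mem_closedBall_zero_iff.mpr (by linarith [norm_add_le ζ k]))
  have hcross : ⟪C' k, ζ⟫_ℝ = ⟪C' ζ, k⟫_ℝ := by
    rw [real_inner_comm]
    exact (hC's ζ k).symm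
  simp only [map_add, inner_add_left, inner_add_right] at hle ⊢
  linarith

/-- The slopes `p` for which the touching point may be a point of non-differentiability of the
resolvent `J` lie in the Lipschitz image under `w ↦ w - J w - C' (J w)` of a null set, where
`C' = C + ε`; every other slope is good. -/
lemma exists_hasSecondOrderExpansionAt [FiniteDimensional ℝ Z] {L : ℝ}
    (hF : ∀ ζ, ∃ q, ‖q‖ ≤ L ∧ HasSubgradientAt F q ζ) (hCs : C.IsSymmetric)
    (hC : ∀ z, F z ≤ F 0 + 1 / 2 * ⟪C z, z⟫_ℝ) {ε : ℝ} (hε : 0 < ε) :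
    ∃ (ζ q : Z) (M : Z →L[ℝ] Z), ‖ζ‖ ≤ ε ∧ ‖q‖ ≤ ε ∧
      (∀ q', HasSubgradientAt F q' ζ → q' = q) ∧ M.IsSymmetric ∧
      (∀ z, 0 ≤ ⟪M z, z⟫_ℝ) ∧ (∀ z, ⟪M z, z⟫_ℝ ≤ ⟪C z, z⟫_ℝ + ε * ‖z‖ ^ 2) ∧
      HasSecondOrderExpansionAt F q M ζ := by
  have hF' : ∀ ζ, ∃ q, HasSubgradientAt F q ζ := fun ζ => (hF ζ).imp fun _ h => h.2
  obtain ⟨K, J, hJlip, hJ⟩ := exists_lipschitzWith_resolvent F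
  set C' : Z →L[ℝ] Z := C + ε • .id ℝ Z with hC'
  set r : ℝ := ε / (2 * (1 + ‖C'‖)) with hr_def
  have hr : 0 < r := by positivity
  have hrε : r + ‖C'‖ * r = ε / 2 := by
    rw [hr_def]
    field_simp
  obtain ⟨p, hp, hpJ⟩ := exists_mem_ball_forall_differentiableAt hJlip
    ((LipschitzWith.id.sub hJlip).sub (C'.lipschitz.comp hJlip))
    (show 0 < min (ε / 2) (ε / 2 * r) by positivity)
  obtain ⟨hpε, hpr⟩ := lt_min_iff.mp (mem_ball_zero_iff.mp hp)
  obtain ⟨ζ, hζ, htouch⟩ :=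
    exists_forall_le_tilted_quadratic (continuous_of_bounded_hasSubgradientAt hF) hCs hC hr hpr
  rw [← hC'] at htouch
  set q := C' ζ + p with hq_def
  have hupper : ∀ᶠ k in 𝓝 0, F (ζ + k) ≤ F ζ + ⟪q, k⟫_ℝ + 1 / 2 * ‖C'‖ * ‖k‖ ^ 2 := by
    filter_upwards [htouch] with k hk
    linarith [inner_apply_self_le C' k]
  have huniq : ∀ q', HasSubgradientAt F q' ζ → q' = q := fun q' hq' =>
    hq'.eq_of_eventually_le hupper
  have hq : HasSubgradientAt F q ζ := by
    obtain ⟨q', hq'⟩ := hF' ζ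
    rwa [← huniq q' hq']
  have hdiff : DifferentiableAt ℝ J (ζ + q) := by
    refine hpJ _ ?_
    change ζ + q - J (ζ + q) - C' (J (ζ + q)) = p
    rw [hJ ζ q hq, hq_def]
    abel
  obtain ⟨M₀, hM₀⟩ := exists_hasSecondOrderExpansionAt_of_differentiableAt_resolvent hJ hF' hq
    (by positivity) hupper hdiff
  obtain ⟨M, hMs, hM⟩ := hM₀.exists_isSymmetric
  have hC'ζ : ‖C' ζ‖ ≤ ‖C'‖ * r := (C'.le_opNorm ζ).trans (by gcongr)
  have hC'r : 0 ≤ ‖C'‖ * r := by positivity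
  refine ⟨ζ, q, M, by linarith, by linarith [norm_add_le (C' ζ) p], huniq, hMs,
    hM.inner_nonneg hq, fun z => (hM.inner_le htouch z).trans_eq ?_, hM⟩
  simp [hC', inner_add_left, inner_smul_left]

end Alexandrov

section SupConvolution

variable {Z : Type*} [NormedAddCommGroup Z] [InnerProductSpace ℝ Z] {u F : Z → ℝ} {K : Set Z}
  {lam : ℝ} {m : Z → Z}

/-- `F` is the sup-convolution of `u` restricted to `K`, and `m ξ` is a point of `K` at which the
supremum defining `F ξ` is attained. With `lam / 2 * ‖ξ‖ ^ 2` added, the usual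
`sup (u x - lam / 2 * ‖x - ξ‖ ^ 2)` becomes a supremum of affine functions of `ξ`; this convex
normalisation is the one used here. -/
structure IsSupConvolution (u : Z → ℝ) (K : Set Z) (lam : ℝ) (F : Z → ℝ) (m : Z → Z) : Prop where
  mem : ∀ ξ, m ξ ∈ K
  eq : ∀ ξ, F ξ = u (m ξ) - lam / 2 * ‖m ξ‖ ^ 2 + lam * ⟪m ξ, ξ⟫_ℝ
  le : ∀ ξ, ∀ x ∈ K, u x - lam / 2 * ‖x‖ ^ 2 + lam * ⟪x, ξ⟫_ℝ ≤ F ξ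

lemma exists_isSupConvolution (hK : IsCompact K) (hK₀ : K.Nonempty)
    (hu : UpperSemicontinuousOn u K) (lam : ℝ) : ∃ F m, IsSupConvolution u K lam F m := by
  have hmax : ∀ ξ : Z, ∃ x ∈ K, ∀ y ∈ K,
      u y + (-(lam / 2 * ‖y‖ ^ 2) + lam * ⟪y, ξ⟫_ℝ) ≤
        u x + (-(lam / 2 * ‖x‖ ^ 2) + lam * ⟪x, ξ⟫_ℝ) := fun ξ => by
    have hcont : Continuous fun y : Z => -(lam / 2 * ‖y‖ ^ 2) + lam * ⟪y, ξ⟫_ℝ := by fun_prop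
    exact (hu.add hcont.continuousOn.upperSemicontinuousOn).exists_isMaxOn hK₀ hK
  choose m hm hmle using hmax
  refine ⟨_, m, hm, fun _ => rfl, fun ξ x hx => ?_⟩
  linarith [hmle ξ x hx]

namespace IsSupConvolution

lemma hasSubgradientAt (hF : IsSupConvolution u K lam F m) (ξ : Z) :
    HasSubgradientAt F (lam • m ξ) ξ := fun ξ' => by
  rw [hF.eq ξ, real_inner_smul_left, inner_sub_right]
  linarith [hF.le ξ' _ (hF.mem ξ)]

lemma le_add_quadratic {A : Z →L[ℝ] Z} {η : ℝ} (hF : IsSupConvolution u K lam F m)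
    (hA : A.IsSymmetric) (hη : 0 < η) (hlam : lam = η⁻¹ + ‖A‖) (h₀ : (0 : Z) ∈ K)
    (hu : ∀ x ∈ K, u x ≤ u 0 + 1 / 2 * ⟪A x, x⟫_ℝ) (ζ : Z) :
    F ζ ≤ F 0 + 1 / 2 * (⟪A ζ, ζ⟫_ℝ + η * ‖A ζ‖ ^ 2 + lam * ‖ζ‖ ^ 2) := by
  obtain ⟨k, hk⟩ : ∃ k, m ζ = ζ + k := ⟨m ζ - ζ, by abel⟩
  have hux := hu _ (hF.mem ζ)
  have hF₀ : u 0 ≤ F 0 := by simpa using hF.le 0 0 h₀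
  have hexpand : ⟪A (ζ + k), ζ + k⟫_ℝ = ⟪A ζ, ζ⟫_ℝ + 2 * ⟪A ζ, k⟫_ℝ + ⟪A k, k⟫_ℝ := by
    have hsymm : ⟪A k, ζ⟫_ℝ = ⟪A ζ, k⟫_ℝ := (hA k ζ).trans (real_inner_comm _ _)
    rw [map_add, inner_add_left, inner_add_right, inner_add_right, hsymm]
    ring
  have hyoung : 2 * ⟪A ζ, k⟫_ℝ ≤ η * ‖A ζ‖ ^ 2 + η⁻¹ * ‖k‖ ^ 2 := by
    have hsq : 0 ≤ η⁻¹ * (η * ‖A ζ‖ - ‖k‖) ^ 2 := by positivity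
    have hid : η⁻¹ * (η * ‖A ζ‖ - ‖k‖) ^ 2 =
        η * ‖A ζ‖ ^ 2 - 2 * (‖A ζ‖ * ‖k‖) + η⁻¹ * ‖k‖ ^ 2 := by
      field_simp
      ring
    linarith [real_inner_le_norm (A ζ) k]
  have hAk := inner_apply_self_le A k
  rw [hk, hexpand] at hux
  rw [hF.eq ζ, hk, norm_add_sq_real, inner_add_left, real_inner_self_eq_norm_sq,
    real_inner_comm ζ k, hlam]
  linarith

lemma tendsto_apply {ι : Type*} {l : Filter ι} {ξ : ι → Z} (hF : IsSupConvolution u K lam F m)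
    (hu : UpperSemicontinuousOn u K) (h₀ : (0 : Z) ∈ K) (hξ : Tendsto ξ l (𝓝 0))
    (hm : Tendsto (fun j => m (ξ j)) l (𝓝 0)) : Tendsto (fun j => u (m (ξ j))) l (𝓝 (u 0)) := by
  refine tendsto_order.mpr ⟨fun a ha => ?_, fun a ha => ?_⟩
  · have hlow : Tendsto (fun j => u 0 + (lam / 2 * ‖m (ξ j)‖ ^ 2 - lam * ⟪m (ξ j), ξ j⟫_ℝ)) l
        (𝓝 (u 0)) := by
      simpa using ((hm.norm.pow 2).const_mul (lam / 2)).sub ((hm.inner hξ).const_mul lam)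
        |>.const_add (u 0)
    filter_upwards [hlow.eventually (lt_mem_nhds ha)] with j hj
    have hle := hF.le (ξ j) 0 h₀
    rw [norm_zero, inner_zero_left, hF.eq] at hle
    linarith
  · exact (tendsto_nhdsWithin_iff.mpr ⟨hm, .of_forall fun j => hF.mem _⟩).eventually (hu 0 h₀ a ha)

lemma piLp {ι : Type*} [Fintype ι] {u F : ι → Z → ℝ} {K : ι → Set Z} {m : ι → Z → Z}
    (hF : ∀ i, IsSupConvolution (u i) (K i) lam (F i) (m i)) :
    IsSupConvolution (fun x : PiLp 2 fun _ : ι => Z => ∑ i, u i (x i)) {x | ∀ i, x i ∈ K i} lam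
      (fun ζ => ∑ i, F i (ζ i)) fun ζ => WithLp.toLp 2 fun i => m i (ζ i) where
  mem ζ i := (hF i).mem _
  eq ζ := by
    simp only [PiLp.norm_sq_eq_of_L2, PiLp.inner_apply, Finset.mul_sum, ← Finset.sum_sub_distrib,
      ← Finset.sum_add_distrib, (hF _).eq]
  le ζ x hx := by
    simp only [PiLp.norm_sq_eq_of_L2, PiLp.inner_apply, Finset.mul_sum, ← Finset.sum_sub_distrib,
      ← Finset.sum_add_distrib]
    exact Finset.sum_le_sum fun i _ => (hF i).le _ _ (hx i)

end IsSupConvolution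

/-- The graph `{(x, u x, p, X)}` of the second-order superjets of `u` relative to `K`. The limiting
superjets of the theory of viscosity solutions are the points of the closure of this set. -/
def superjetGraph (u : Z → ℝ) (K : Set Z) : Set (Z × ℝ × Z × (Z →L[ℝ] Z)) :=
  {J | J.1 ∈ K ∧ J.2.1 = u J.1 ∧ J.2.2.2.IsSymmetric ∧ ∀ᶠ x in 𝓝[K] J.1,
    u x ≤ u J.1 + ⟪J.2.2.1, x - J.1⟫_ℝ + 1 / 2 * ⟪J.2.2.2 (x - J.1), x - J.1⟫_ℝ}

lemma isSymmetric_of_mem_closure_superjetGraph {J : Z × ℝ × Z × (Z →L[ℝ] Z)}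
    (hJ : J ∈ closure (superjetGraph u K)) : J.2.2.2.IsSymmetric := by
  have hclosed : IsClosed {J : Z × ℝ × Z × (Z →L[ℝ] Z) |
      ∀ a b, ⟪J.2.2.2 a, b⟫_ℝ = ⟪a, J.2.2.2 b⟫_ℝ} := by
    simp only [ofPred_forall]
    exact isClosed_iInter fun a => isClosed_iInter fun b => isClosed_eq (by fun_prop) (by fun_prop)
  exact closure_minimal (fun J hJ => hJ.2.2.1) hclosed hJ

/- The magic property: the sup-convolution at `ξ` and `u` at the maximiser `m ξ` have the same
superjets, up to the shift by `lam` caused by the convex normalisation. -/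
lemma IsSupConvolution.mem_closure_superjetGraph {N : Z →L[ℝ] Z} {ξ : Z}
    (hF : IsSupConvolution u K lam F m) (hN : N.IsSymmetric)
    (hexp : HasSecondOrderExpansionAt F (lam • m ξ) N ξ) :
    (m ξ, u (m ξ), lam • (m ξ - ξ), N - lam • ContinuousLinearMap.id ℝ Z) ∈
      closure (superjetGraph u K) := by
  let J : ℝ → Z × ℝ × Z × (Z →L[ℝ] Z) := fun e =>
    (m ξ, u (m ξ), lam • (m ξ - ξ), N - (lam - e) • ContinuousLinearMap.id ℝ Z)
  have hJ : Tendsto J (𝓝[>] 0) (𝓝 (J 0)) :=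
    (show Continuous J by fun_prop).continuousAt.tendsto.mono_left nhdsWithin_le_nhds
  rw [show (m ξ, u (m ξ), lam • (m ξ - ξ), N - lam • ContinuousLinearMap.id ℝ Z) = J 0 by
    simp [J]]
  refine mem_closure_of_tendsto hJ (eventually_mem_nhdsWithin.mono fun e he => ?_)
  refine ⟨hF.mem ξ, rfl, hN.sub (LinearMap.IsSymmetric.id.smul (by simp)), ?_⟩
  have hsub : Tendsto (fun x => x - m ξ) (𝓝[K] m ξ) (𝓝 0) :=
    ((continuous_sub_right (m ξ)).tendsto' _ _ (sub_self _)).mono_left nhdsWithin_le_nhds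
  filter_upwards [self_mem_nhdsWithin,
    hsub.eventually (hexp.bound (half_pos (show 0 < e from he)))] with x hx hrem
  obtain ⟨h, rfl⟩ : ∃ h, x = m ξ + h := ⟨x - m ξ, by abel⟩
  have hle := hF.le (ξ + h) _ hx
  simp only [J, add_sub_cancel_left, sub_apply, smul_apply, ContinuousLinearMap.id_apply,
    inner_sub_left, real_inner_smul_left, real_inner_self_eq_norm_sq, smul_sub] at hrem ⊢
  rw [Real.norm_of_nonneg (sq_nonneg ‖h‖)] at hrem
  rw [norm_add_sq_real, inner_add_left, inner_add_right, inner_add_right,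
    real_inner_self_eq_norm_sq, real_inner_comm ξ h] at hle
  linarith [(abs_le.mp hrem).2, hF.eq ξ]

lemma mem_closure_superjetGraph_of_translate {x p : Z} {X : Z →L[ℝ] Z}
    (h : (0, u x, 0, X) ∈ closure (superjetGraph (fun y => u (x + y) - ⟪p, y⟫_ℝ) {y | x + y ∈ K})) :
    (x, u x, p, X) ∈ closure (superjetGraph u K) := by
  let f : Z × ℝ × Z × (Z →L[ℝ] Z) → Z × ℝ × Z × (Z →L[ℝ] Z) := fun J =>
    (x + J.1, J.2.1 + ⟪p, J.1⟫_ℝ, p + J.2.2.1, J.2.2.2)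
  have hf : (x, u x, p, X) = f (0, u x, 0, X) := by simp [f]
  rw [hf]
  refine map_mem_closure (by fun_prop) h fun ⟨y, r, q, Y⟩ ⟨hy, hr, hY, hjet⟩ => ?_
  refine ⟨hy, eq_sub_iff_add_eq.mp hr, hY, ?_⟩
  have hsub : Tendsto (fun x' => x' - x) (𝓝[K] (x + y)) (𝓝[{y | x + y ∈ K}] y) := by
    refine tendsto_nhdsWithin_iff.mpr ⟨?_, eventually_mem_nhdsWithin.mono fun x' hx' => ?_⟩
    · exact ((continuous_sub_right x).tendsto' _ _ (by simp)).mono_left nhdsWithin_le_nhds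
    · simpa using hx'
  filter_upwards [hsub.eventually hjet] with x' hx'
  have hsplit : ⟪p, x' - x⟫_ℝ = ⟪p, x' - (x + y)⟫_ℝ + ⟪p, y⟫_ℝ := by
    rw [← inner_add_right, sub_add_eq_sub_sub, sub_add_cancel]
  simp only [f, add_sub_cancel, sub_add_eq_sub_sub, inner_add_left] at hx' hsplit ⊢
  linarith

end SupConvolution

section TheoremOnSums

variable {E ι : Type*} [NormedAddCommGroup E] [InnerProductSpace ℝ E] [DecidableEq ι]

/-- The inclusion of the `i`-th summand in the Hilbert sum of copies of `E`, as a continuous linear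
map. -/
def singleL (E : Type*) [NormedAddCommGroup E] [InnerProductSpace ℝ E] (i : ι) :
    E →L[ℝ] PiLp 2 fun _ : ι => E :=
  (PiLp.continuousLinearEquiv 2 ℝ fun _ : ι => E).symm ∘L
    ContinuousLinearMap.single ℝ (fun _ : ι => E) i

/-- The `i`-th diagonal block of an operator on the Hilbert sum of copies of `E`. -/
def diagBlock (M : (PiLp 2 fun _ : ι => E) →L[ℝ] PiLp 2 fun _ : ι => E) (i : ι) : E →L[ℝ] E :=
  PiLp.proj 2 (fun _ : ι => E) i ∘L M ∘L singleL E i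

lemma singleL_apply (i : ι) (a : E) : singleL E i a = WithLp.toLp 2 (Pi.single i a) := rfl

variable [Fintype ι]

lemma norm_singleL_apply (i : ι) (a : E) : ‖singleL E i a‖ = ‖a‖ :=
  PiLp.norm_single 2 (fun _ : ι => E) i a

lemma inner_singleL_left (i : ι) (a : E) (z : PiLp 2 fun _ : ι => E) :
    ⟪singleL E i a, z⟫_ℝ = ⟪a, z i⟫_ℝ := by
  rw [PiLp.inner_apply, Finset.sum_eq_single i]
  · simp [singleL_apply]
  · intro j _ hj
    simp [singleL_apply, hj]
  · simp

lemma inner_singleL_right (i : ι) (a : E) (z : PiLp 2 fun _ : ι => E) :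
    ⟪z, singleL E i a⟫_ℝ = ⟪z i, a⟫_ℝ := by
  rw [real_inner_comm, inner_singleL_left, real_inner_comm]

variable {M : (PiLp 2 fun _ : ι => E) →L[ℝ] PiLp 2 fun _ : ι => E}

lemma inner_diagBlock_apply (i : ι) (a b : E) :
    ⟪diagBlock M i a, b⟫_ℝ = ⟪M (singleL E i a), singleL E i b⟫_ℝ := by
  rw [inner_singleL_right]
  rfl

lemma isSymmetric_diagBlock (hM : M.IsSymmetric) (i : ι) : (diagBlock M i).IsSymmetric :=
  fun a b => ((inner_diagBlock_apply i a b).trans (hM _ _)).trans (inner_singleL_left _ _ _)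

lemma sum_inner_diagBlock_le_of_tendsto {β : Type*} {l : Filter β} [l.NeBot]
    {N : β → (PiLp 2 fun _ : ι => E) →L[ℝ] PiLp 2 fun _ : ι => E} (hN : Tendsto N l (𝓝 M))
    {h : PiLp 2 fun _ : ι => E}
    (hle : ∀ b, ∑ i, ⟪diagBlock (N b) i (h i), h i⟫_ℝ ≤ ⟪N b h, h⟫_ℝ) :
    ∑ i, ⟪diagBlock M i (h i), h i⟫_ℝ ≤ ⟪M h, h⟫_ℝ := by
  have hblocks : Continuous fun N : (PiLp 2 fun _ : ι => E) →L[ℝ] PiLp 2 fun _ : ι => E =>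
      ∑ i, ⟪diagBlock N i (h i), h i⟫_ℝ := by
    unfold diagBlock
    fun_prop
  have hfull : Continuous fun N : (PiLp 2 fun _ : ι => E) →L[ℝ] PiLp 2 fun _ : ι => E =>
      ⟪N h, h⟫_ℝ := by fun_prop
  exact le_of_tendsto_of_tendsto' ((hblocks.tendsto M).comp hN) ((hfull.tendsto M).comp hN) hle

variable {F : ι → E → ℝ} {q ζ : PiLp 2 fun _ : ι => E}

lemma HasSecondOrderExpansionAt.component
    (hF : HasSecondOrderExpansionAt (fun ζ : PiLp 2 fun _ : ι => E => ∑ i, F i (ζ i)) q M ζ)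
    (i : ι) : HasSecondOrderExpansionAt (F i) (q i) (diagBlock M i) (ζ i) := by
  have hcomp := hF.comp_tendsto ((singleL E i).continuous.tendsto' 0 0 (map_zero _))
  refine hcomp.congr (fun a => ?_) fun a => by simp only [Function.comp, norm_singleL_apply]
  have hsum : ∑ j, F j ((ζ + singleL E i a) j) - ∑ j, F j (ζ j) = F i (ζ i + a) - F i (ζ i) := by
    rw [← Finset.sum_sub_distrib, Finset.sum_eq_single i]
    · simp [singleL_apply]
    · intro j _ hj
      simp [singleL_apply, hj]
    · simp
  simp only [Function.comp, hsum, inner_diagBlock_apply, inner_singleL_right]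

/- Adding up the expansions of the summands gives a second expansion of the sum, whose Hessian has
the same diagonal blocks and no others; the two Hessians therefore agree. -/
lemma HasSecondOrderExpansionAt.sum_inner_diagBlock_le
    (hF : HasSecondOrderExpansionAt (fun ζ : PiLp 2 fun _ : ι => E => ∑ i, F i (ζ i)) q M ζ)
    (h : PiLp 2 fun _ : ι => E) : ∑ i, ⟪diagBlock M i (h i), h i⟫_ℝ ≤ ⟪M h, h⟫_ℝ := by
  let D : (PiLp 2 fun _ : ι => E) →L[ℝ] PiLp 2 fun _ : ι => E :=
    ∑ i, singleL E i ∘L diagBlock M i ∘L PiLp.proj 2 (fun _ : ι => E) i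
  have hD : ∀ h, ⟪D h, h⟫_ℝ = ∑ i, ⟪diagBlock M i (h i), h i⟫_ℝ := fun h => by
    simp [D, sum_apply, sum_inner, inner_singleL_left]
  let f : ι → E → ℝ := fun i a =>
    F i (ζ i + a) - F i (ζ i) - ⟪q i, a⟫_ℝ - 1 / 2 * ⟪diagBlock M i a, a⟫_ℝ
  have hf : (fun h : PiLp 2 fun _ : ι => E => ∑ i, f i (h i)) =o[𝓝 0] fun h => ‖h‖ ^ 2 := by
    refine IsLittleO.fun_sum fun i _ => ?_
    have hproj := (PiLp.proj (𝕜 := ℝ) 2 (fun _ : ι => E) i).continuous.tendsto' 0 0 (map_zero _)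
    refine ((hF.component i).comp_tendsto hproj).trans_isBigO ?_
    refine IsBigO.of_bound' (.of_forall fun h => ?_)
    rw [Function.comp_apply, norm_pow, norm_norm, norm_pow, norm_norm]
    exact pow_le_pow_left₀ (norm_nonneg _) (PiLp.norm_apply_le h i) 2
  have hN := inner_apply_self_nonpos_of_le_isLittleO (N := D - M)
    ((hF.sub hf).const_mul_left 2) (.of_forall fun h => ?_) h
  · rw [sub_apply, inner_sub_left, hD] at hN
    linarith
  · simp only [f, sub_apply, inner_sub_left, hD, PiLp.inner_apply q, Finset.sum_sub_distrib,
      ← Finset.mul_sum, PiLp.add_apply]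
    linarith

namespace IsSupConvolution

variable {Z : Type*} [NormedAddCommGroup Z] [InnerProductSpace ℝ Z] [FiniteDimensional ℝ Z]
  {u F : Z → ℝ} {K : Set Z} {lam : ℝ} {m : Z → Z} {C : Z →L[ℝ] Z}

lemma exists_hasSecondOrderExpansionAt (hF : IsSupConvolution u K lam F m)
    (hK : Bornology.IsBounded K) (hC : C.IsSymmetric) (hFC : ∀ z, F z ≤ F 0 + 1 / 2 * ⟪C z, z⟫_ℝ)
    {ε : ℝ} (hε : 0 < ε) :
    ∃ ζ M, ‖ζ‖ ≤ ε ∧ ‖lam • m ζ‖ ≤ ε ∧ M.IsSymmetric ∧ (∀ z, 0 ≤ ⟪M z, z⟫_ℝ) ∧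
      (∀ z, ⟪M z, z⟫_ℝ ≤ ⟪C z, z⟫_ℝ + ε * ‖z‖ ^ 2) ∧
      HasSecondOrderExpansionAt F (lam • m ζ) M ζ := by
  obtain ⟨R, hR⟩ := hK.exists_norm_le
  obtain ⟨ζ, q, M, hζ, hq, hq_unique, hM, hM₀, hMC, hexp⟩ :=
    _root_.exists_hasSecondOrderExpansionAt (L := ‖lam‖ * R)
      (fun ζ => ⟨lam • m ζ, by rw [norm_smul]; gcongr; exact hR _ (hF.mem ζ),
        hF.hasSubgradientAt ζ⟩) hC hFC hε
  obtain rfl := hq_unique _ (hF.hasSubgradientAt ζ)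
  exact ⟨ζ, M, hζ, hq, hM, hM₀, hMC, hexp⟩

lemma exists_seq_hasSecondOrderExpansionAt (hF : IsSupConvolution u K lam F m) (hlam : lam ≠ 0)
    (hK : Bornology.IsBounded K) (hC : C.IsSymmetric)
    (hFC : ∀ z, F z ≤ F 0 + 1 / 2 * ⟪C z, z⟫_ℝ) :
    ∃ (ζ : ℕ → Z) (M : ℕ → Z →L[ℝ] Z) (M' : Z →L[ℝ] Z), Tendsto ζ atTop (𝓝 0) ∧
      Tendsto (fun j => m (ζ j)) atTop (𝓝 0) ∧ Tendsto M atTop (𝓝 M') ∧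
      (∀ j, (M j).IsSymmetric ∧ HasSecondOrderExpansionAt F (lam • m (ζ j)) (M j) (ζ j)) ∧
      ∀ z, ⟪M' z, z⟫_ℝ ≤ ⟪C z, z⟫_ℝ := by
  have hε (j : ℕ) : (0 : ℝ) < 1 / (j + 1) := Nat.one_div_pos_of_nat
  have hε₀ : Tendsto (fun j : ℕ => (1 : ℝ) / (j + 1)) atTop (𝓝 0) :=
    tendsto_one_div_add_atTop_nhds_zero_nat
  choose ζ M hζ hm hM hM₀ hMC hexp using fun j =>
    hF.exists_hasSecondOrderExpansionAt hK hC hFC (hε j)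
  have hbound : ∀ j, M j ∈ Metric.closedBall 0 (‖C‖ + 1) := fun j => by
    refine mem_closedBall_zero_iff.mpr
      (norm_le_of_abs_inner_apply_self_le (hM j) (by positivity) fun z => ?_)
    have hε₁ : (1 : ℝ) / (j + 1) ≤ 1 := div_le_one_of_le₀ (by simp) (by positivity)
    rw [abs_of_nonneg (hM₀ j z)]
    nlinarith [hMC j z, inner_apply_self_le C z, sq_nonneg ‖z‖]
  have : ProperSpace (Z →L[ℝ] Z) := FiniteDimensional.proper_real _
  obtain ⟨M', -, φ, hφ, hM'⟩ := tendsto_subseq_of_bounded Metric.isBounded_closedBall hbound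
  have hεφ := hε₀.comp hφ.tendsto_atTop
  refine ⟨ζ ∘ φ, M ∘ φ, M', squeeze_zero_norm (fun j => hζ (φ j)) hεφ, ?_, hM',
    fun j => ⟨hM _, hexp _⟩, fun z => ?_⟩
  · have hlim := (squeeze_zero_norm (fun j => hm (φ j)) hεφ).const_smul lam⁻¹
    simpa only [inv_smul_smul₀ hlam, smul_zero, Function.comp_apply] using hlim
  · have hquad : Continuous fun M : Z →L[ℝ] Z => ⟪M z, z⟫_ℝ := by fun_prop
    refine le_of_tendsto_of_tendsto' ((hquad.tendsto M').comp hM') ?_ fun j => hMC (φ j) z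
    simpa using (hεφ.mul_const (‖z‖ ^ 2)).const_add ⟪C z, z⟫_ℝ

end IsSupConvolution

lemma exists_isSymmetric_inner_eq {Z : Type*} [NormedAddCommGroup Z] [InnerProductSpace ℝ Z]
    {A : Z →L[ℝ] Z} (hA : A.IsSymmetric) (η lam : ℝ) :
    ∃ C : Z →L[ℝ] Z, C.IsSymmetric ∧
      ∀ z, ⟪C z, z⟫_ℝ = ⟪A z, z⟫_ℝ + η * ‖A z‖ ^ 2 + lam * ‖z‖ ^ 2 := by
  have hAA (x y : Z) : ⟪A (A x), y⟫_ℝ = ⟪A x, A y⟫_ℝ := hA (A x) y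
  refine ⟨A + η • (A ∘L A) + lam • ContinuousLinearMap.id ℝ Z, fun x y => ?_, fun z => ?_⟩
  · have hxy : ⟪A x, y⟫_ℝ = ⟪x, A y⟫_ℝ := hA x y
    have hxAy : ⟪A x, A y⟫_ℝ = ⟪x, A (A y)⟫_ℝ := hA x (A y)
    simp [inner_add_left, inner_add_right, real_inner_smul_left, real_inner_smul_right, hxy, hAA,
      hxAy]
  · simp [inner_add_left, real_inner_smul_left, hAA]

variable {E ι : Type*} [NormedAddCommGroup E] [InnerProductSpace ℝ E] [FiniteDimensional ℝ E]
  [Fintype ι] {u : ι → E → ℝ} {K : ι → Set E}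
  {A : (PiLp 2 fun _ : ι => E) →L[ℝ] PiLp 2 fun _ : ι => E} {η : ℝ}

lemma exists_mem_closure_superjetGraph_zero (hK : ∀ i, IsCompact (K i))
    (hu : ∀ i, UpperSemicontinuousOn (u i) (K i)) (h₀ : ∀ i, (0 : E) ∈ K i) (hA : A.IsSymmetric)
    (hη : 0 < η) (hmax : ∀ x : PiLp 2 fun _ : ι => E, (∀ i, x i ∈ K i) →
      ∑ i, u i (x i) ≤ ∑ i, u i 0 + 1 / 2 * ⟪A x, x⟫_ℝ) :
    ∃ X : ι → E →L[ℝ] E,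
      (∀ h : PiLp 2 fun _ : ι => E,
        ∑ i, ⟪X i (h i), h i⟫_ℝ ≤ ⟪A h, h⟫_ℝ + η * ‖A h‖ ^ 2) ∧
      ∀ i, (0, u i 0, 0, X i) ∈ closure (superjetGraph (u i) (K i)) := by
  classical
  obtain ⟨lam, hlam⟩ : ∃ lam, lam = η⁻¹ + ‖A‖ := ⟨_, rfl⟩
  have hlam_pos : 0 < lam := by rw [hlam]; positivity
  choose F m hF using fun i => exists_isSupConvolution (hK i) ⟨0, h₀ i⟩ (hu i) lam
  have hFsum := IsSupConvolution.piLp hF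
  have hbounded : Bornology.IsBounded {x : PiLp 2 fun _ : ι => E | ∀ i, x i ∈ K i} := by
    have hpre := (PiLp.homeomorph 2 fun _ : ι => E).isCompact_preimage.mpr (isCompact_univ_pi hK)
    exact hpre.isBounded.subset fun x hx i _ => hx i
  obtain ⟨C, hC, hCz⟩ := exists_isSymmetric_inner_eq hA η lam
  obtain ⟨ζ, M, M', hζ, hm, hM, hexp, hM'⟩ :=
    hFsum.exists_seq_hasSecondOrderExpansionAt hlam_pos.ne' hbounded hC fun z => by
      rw [hCz]
      exact hFsum.le_add_quadratic hA hη hlam h₀ hmax z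
  have hblock (i) : Tendsto (fun j => diagBlock (M j) i) atTop (𝓝 (diagBlock M' i)) :=
    ((continuous_const.clm_comp (continuous_id.clm_comp continuous_const)).tendsto M').comp hM
  have hproj (i) {z : ℕ → PiLp 2 fun _ : ι => E} (hz : Tendsto z atTop (𝓝 0)) :
      Tendsto (fun j => z j i) atTop (𝓝 0) :=
    (PiLp.continuous_apply 2 (fun _ : ι => E) i).tendsto' 0 0 rfl |>.comp hz
  refine ⟨fun i => diagBlock M' i - lam • ContinuousLinearMap.id ℝ E, fun h => ?_, fun i => ?_⟩
  · have hlim : ∑ i, ⟪diagBlock M' i (h i), h i⟫_ℝ ≤ ⟪M' h, h⟫_ℝ :=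
      sum_inner_diagBlock_le_of_tendsto hM (fun j => (hexp j).2.sum_inner_diagBlock_le h)
    have hnorm : ∑ i, ⟪h i, h i⟫_ℝ = ‖h‖ ^ 2 := by
      rw [← PiLp.inner_apply, real_inner_self_eq_norm_sq]
    simp only [sub_apply, smul_apply, ContinuousLinearMap.id_apply, inner_sub_left,
      real_inner_smul_left, Finset.sum_sub_distrib, ← Finset.mul_sum, hnorm]
    linarith [hM' h, hCz h]
  · have hmi := hproj i hm
    have hζi := hproj i hζ
    have hu_lim := (hF i).tendsto_apply (hu i) (h₀ i) hζi hmi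
    have hp : Tendsto (fun j => lam • (m i (ζ j i) - ζ j i)) atTop (𝓝 0) := by
      simpa using (hmi.sub hζi).const_smul lam
    exact isClosed_closure.mem_of_tendsto
      (hmi.prodMk_nhds (hu_lim.prodMk_nhds (hp.prodMk_nhds ((hblock i).sub_const _))))
      (.of_forall fun j => (hF i).mem_closure_superjetGraph
        (isSymmetric_diagBlock (hexp j).1 i) ((hexp j).2.component i))

/- **Theorem on sums** (Crandall–Ishii). -/
theorem exists_mem_closure_superjetGraph {x p : ι → E} (hK : ∀ i, IsCompact (K i))
    (hu : ∀ i, UpperSemicontinuousOn (u i) (K i)) (hx : ∀ i, x i ∈ K i) (hA : A.IsSymmetric)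
    (hη : 0 < η) (hmax : ∀ h : PiLp 2 fun _ : ι => E, (∀ i, x i + h i ∈ K i) →
      ∑ i, u i (x i + h i) ≤ ∑ i, (u i (x i) + ⟪p i, h i⟫_ℝ) + 1 / 2 * ⟪A h, h⟫_ℝ) :
    ∃ X : ι → E →L[ℝ] E,
      (∀ h : PiLp 2 fun _ : ι => E,
        ∑ i, ⟪X i (h i), h i⟫_ℝ ≤ ⟪A h, h⟫_ℝ + η * ‖A h‖ ^ 2) ∧
      ∀ i, (x i, u i (x i), p i, X i) ∈ closure (superjetGraph (u i) (K i)) := by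
  have hK' (i) : IsCompact {y | x i + y ∈ K i} :=
    (Homeomorph.addLeft (x i)).isCompact_preimage.mpr (hK i)
  have hu' (i) : UpperSemicontinuousOn (fun y => u i (x i + y) + -⟪p i, y⟫_ℝ)
      {y | x i + y ∈ K i} := by
    have hadd : ContinuousOn (fun y => x i + y) {y | x i + y ∈ K i} := by fun_prop
    have hinner : Continuous fun y => -⟪p i, y⟫_ℝ := by fun_prop
    exact ((hu i).comp hadd fun y hy => hy).add hinner.continuousOn.upperSemicontinuousOn
  have hx' (i) : (0 : E) ∈ {y | x i + y ∈ K i} := by simpa using hx i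
  obtain ⟨X, hX, hmem⟩ := exists_mem_closure_superjetGraph_zero hK' hu' hx' hA hη fun h hh => by
    have hle := hmax h hh
    simp only [Finset.sum_add_distrib, Finset.sum_neg_distrib, add_zero, inner_zero_right,
      neg_zero] at hle ⊢
    linarith
  refine ⟨X, hX, fun i => mem_closure_superjetGraph_of_translate ?_⟩
  simpa [← sub_eq_add_neg] using hmem i

end TheoremOnSums

section QuadraticTestFunctions

variable {Z : Type*} [NormedAddCommGroup Z] [InnerProductSpace ℝ Z]

/-- The quadratic polynomial vanishing at `z₀`, with gradient `p` and Hessian `X` there. -/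
def quadraticAt (z₀ p : Z) (X : Z →L[ℝ] Z) (z : Z) : ℝ :=
  ⟪p, z - z₀⟫_ℝ + 1 / 2 * ⟪X (z - z₀), z - z₀⟫_ℝ

lemma continuous_quadraticAt (z₀ p : Z) (X : Z →L[ℝ] Z) : Continuous (quadraticAt z₀ p X) := by
  unfold quadraticAt
  fun_prop

lemma hasFDerivAt_quadraticAt {X : Z →L[ℝ] Z} (hX : X.IsSymmetric) (z₀ p z : Z) :
    HasFDerivAt (quadraticAt z₀ p X) (innerSL ℝ (p + X (z - z₀))) z := by
  have hsub : HasFDerivAt (fun z : Z => z - z₀) (ContinuousLinearMap.id ℝ Z) z :=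
    (hasFDerivAt_id z).sub_const z₀
  refine (((hasFDerivAt_const p z).inner ℝ hsub).add
    (((X.hasFDerivAt.comp z hsub).inner ℝ hsub).const_mul (1 / 2))).congr_fderiv ?_
  ext v
  have hsymm : ⟪X v, z - z₀⟫_ℝ = ⟪X (z - z₀), v⟫_ℝ :=
    (hX v (z - z₀)).trans (real_inner_comm _ _)
  simp only [Function.comp_apply, add_apply, smul_apply, ContinuousLinearMap.comp_apply,
    ContinuousLinearMap.prod_apply, fderivInnerCLM_apply, innerSL_apply_apply, inner_add_left,
    zero_apply, inner_zero_left, ContinuousLinearMap.id_apply, smul_eq_mul, add_zero, hsymm]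
  ring

lemma quadraticAt_add {X : Z →L[ℝ] Z} (hX : X.IsSymmetric) (z₀ p z h : Z) :
    quadraticAt z₀ p X (z + h) =
      quadraticAt z₀ p X z + ⟪p + X (z - z₀), h⟫_ℝ + 1 / 2 * ⟪X h, h⟫_ℝ := by
  have hsymm : ⟪X h, z - z₀⟫_ℝ = ⟪X (z - z₀), h⟫_ℝ :=
    (hX h (z - z₀)).trans (real_inner_comm _ _)
  simp only [quadraticAt, add_sub_right_comm, map_add, inner_add_left, inner_add_right, hsymm]
  ring

end QuadraticTestFunctions

section SpaceTime

/-- Space-time `ℝ × ℝ^d` with its Euclidean inner product. -/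
abbrev SpaceTime (d : ℕ) : Type := WithLp 2 (ℝ × EuclideanSpace ℝ (Fin d))

variable {d : ℕ}

lemma SpaceTime.norm_fst_le (z : SpaceTime d) : |z.fst| ≤ ‖z‖ := by
  refine le_of_sq_le_sq ?_ (norm_nonneg z)
  rw [WithLp.prod_norm_sq_eq_of_L2, Real.norm_eq_abs]
  exact le_add_of_nonneg_right (sq_nonneg _)

lemma SpaceTime.norm_snd_le (z : SpaceTime d) : ‖z.snd‖ ≤ ‖z‖ := by
  refine le_of_sq_le_sq ?_ (norm_nonneg z)
  rw [WithLp.prod_norm_sq_eq_of_L2]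
  exact le_add_of_nonneg_left (sq_nonneg _)

/-- The inclusion of space into space-time as the slice at time `0`. -/
def spaceInclusion (d : ℕ) : EuclideanSpace ℝ (Fin d) →L[ℝ] SpaceTime d :=
  (WithLp.prodContinuousLinearEquiv 2 ℝ ℝ (EuclideanSpace ℝ (Fin d))).symm.toContinuousLinearMap ∘L
    ContinuousLinearMap.inr ℝ ℝ (EuclideanSpace ℝ (Fin d))

/-- The space-space block of an operator on space-time, as an operator on space. -/
def spatialBlock (X : SpaceTime d →L[ℝ] SpaceTime d) :
    EuclideanSpace ℝ (Fin d) →L[ℝ] EuclideanSpace ℝ (Fin d) :=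
  WithLp.sndL 2 ℝ ℝ (EuclideanSpace ℝ (Fin d)) ∘L X ∘L spaceInclusion d

/-- The matrix of the space-space block of an operator on space-time. It is the matrix argument
of `H` when the operator is the second-order part of a space-time jet. -/
def spatialHessian (X : SpaceTime d →L[ℝ] SpaceTime d) : Matrix (Fin d) (Fin d) ℝ :=
  Matrix.of fun i j => spatialBlock X (EuclideanSpace.single j 1) i

lemma spaceInclusion_apply (h : EuclideanSpace ℝ (Fin d)) :
    spaceInclusion d h = WithLp.toLp 2 (0, h) := rfl

lemma spatialBlock_apply_eq_sum (X : SpaceTime d →L[ℝ] SpaceTime d)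
    (v : EuclideanSpace ℝ (Fin d)) (i : Fin d) :
    spatialBlock X v i = ∑ j, spatialHessian X i j * v j := by
  have hv : v = ∑ j, v j • EuclideanSpace.single j (1 : ℝ) := by
    ext i
    simp [Pi.single_apply]
  conv_lhs => rw [hv]
  simp [spatialHessian, mul_comm]

lemma inner_spatialBlock (X : SpaceTime d →L[ℝ] SpaceTime d) (a b : EuclideanSpace ℝ (Fin d)) :
    ⟪spatialBlock X a, b⟫_ℝ = ⟪X (spaceInclusion d a), spaceInclusion d b⟫_ℝ := by
  simp [spatialBlock, spaceInclusion_apply, WithLp.prod_inner_apply]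

lemma isSymmetric_spatialBlock {X : SpaceTime d →L[ℝ] SpaceTime d} (hX : X.IsSymmetric) :
    (spatialBlock X).IsSymmetric := fun a b => by
  rw [ContinuousLinearMap.coe_coe, inner_spatialBlock, real_inner_comm (spatialBlock X b) a,
    inner_spatialBlock]
  exact (hX _ _).trans (real_inner_comm _ _)

lemma continuous_spatialHessian : Continuous (spatialHessian (d := d)) := by
  refine continuous_matrix fun i j => ?_
  have happly : Continuous fun X : SpaceTime d →L[ℝ] SpaceTime d =>
      X (spaceInclusion d (EuclideanSpace.single j 1)) := by fun_prop
  exact (EuclideanSpace.proj (𝕜 := ℝ) i : EuclideanSpace ℝ (Fin d) →L[ℝ] ℝ).continuous.comp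
    ((WithLp.sndL 2 ℝ ℝ (EuclideanSpace ℝ (Fin d))).continuous.comp happly)

lemma isHermitian_spatialHessian {X : SpaceTime d →L[ℝ] SpaceTime d} (hX : X.IsSymmetric) :
    (spatialHessian X).IsHermitian := by
  ext i j
  have hsymm := isSymmetric_spatialBlock hX (EuclideanSpace.single i 1) (EuclideanSpace.single j 1)
  rw [ContinuousLinearMap.coe_coe, EuclideanSpace.inner_single_left,
    EuclideanSpace.inner_single_right] at hsymm
  simpa [spatialHessian] using hsymm

lemma dotProduct_spatialHessian_mulVec (X : SpaceTime d →L[ℝ] SpaceTime d)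
    (h : EuclideanSpace ℝ (Fin d)) :
    h.ofLp ⬝ᵥ spatialHessian X *ᵥ h.ofLp =
      ⟪X (spaceInclusion d h), spaceInclusion d h⟫_ℝ := by
  rw [← inner_spatialBlock, PiLp.inner_apply]
  refine Finset.sum_congr rfl fun i _ => ?_
  simp [spatialBlock_apply_eq_sum, Matrix.mulVec, dotProduct]

lemma isC12_quadraticAt {X : SpaceTime d →L[ℝ] SpaceTime d} (hX : X.IsSymmetric)
    (z₀ p : SpaceTime d) :
    IsC12 d (fun t x => quadraticAt z₀ p X (WithLp.toLp 2 (t, x)))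
      (fun t x => (p + X (WithLp.toLp 2 (t, x) - z₀)).fst)
      (fun t x => (p + X (WithLp.toLp 2 (t, x) - z₀)).snd)
      (fun _ _ => spatialHessian X) := by
  have hspace (t : ℝ) (x : EuclideanSpace ℝ (Fin d)) :
      HasFDerivAt (fun y => (WithLp.toLp 2 (t, y) : SpaceTime d)) (spaceInclusion d) x :=
    ((spaceInclusion d).hasFDerivAt.const_add
      (WithLp.toLp 2 (t, 0) : SpaceTime d)).congr_of_eventuallyEq
      (.of_forall fun y => by simp [spaceInclusion_apply, ← WithLp.toLp_add])
  have htime (t : ℝ) (x : EuclideanSpace ℝ (Fin d)) :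
      HasDerivAt (fun s => (WithLp.toLp 2 (s, x) : SpaceTime d)) (WithLp.toLp 2 (1, 0)) t := by
    simpa [← WithLp.toLp_smul, ← WithLp.toLp_add] using
      ((hasDerivAt_id t).smul_const (WithLp.toLp 2 (1, 0) : SpaceTime d)).const_add
        (WithLp.toLp 2 (0, x) : SpaceTime d)
  have hcont : Continuous fun z : ℝ × EuclideanSpace ℝ (Fin d) =>
      (p + X (WithLp.toLp 2 (z.1, z.2) - z₀) : SpaceTime d) := by
    have := WithLp.prod_continuous_toLp 2 ℝ (EuclideanSpace ℝ (Fin d))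
    fun_prop
  refine ⟨fun t x => ?_, fun t x => ?_,
    fun t x => ⟨spatialBlock X, ?_, spatialBlock_apply_eq_sum X⟩,
    (WithLp.fstL 2 ℝ ℝ (EuclideanSpace ℝ (Fin d))).continuous.comp hcont,
    (WithLp.sndL 2 ℝ ℝ (EuclideanSpace ℝ (Fin d))).continuous.comp hcont, continuous_const⟩
  · refine ((hasFDerivAt_quadraticAt hX z₀ p _).comp_hasDerivAt t (htime t x)).congr_deriv ?_
    simp [WithLp.prod_inner_apply]
  · rw [hasGradientAt_iff_hasFDerivAt]
    refine ((hasFDerivAt_quadraticAt hX z₀ p _).comp x (hspace t x)).congr_fderiv ?_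
    ext v
    simp [spaceInclusion_apply, WithLp.prod_inner_apply]
  · exact (WithLp.sndL 2 ℝ ℝ (EuclideanSpace ℝ (Fin d))).hasFDerivAt.comp x
      ((X.hasFDerivAt.comp x ((hspace t x).sub_const z₀)).const_add p)

end SpaceTime

section ViscositySolutions

variable {d : ℕ} {T ρ : ℝ} {S 𝒪 : Set (EuclideanSpace ℝ (Fin d))}
  {H : EuclideanSpace ℝ (Fin d) → EuclideanSpace ℝ (Fin d) → Matrix (Fin d) (Fin d) ℝ → ℝ}
  {w : ℝ → EuclideanSpace ℝ (Fin d) → ℝ}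

/-- `w` is a viscosity subsolution on `S` of `ρ φ - ∂ₜ φ + H(x, Dφ, D²φ) = 0`, tested at the times
in `[0, T)` with local maxima relative to `[0, T] × S`. -/
def IsViscositySubsolution (T ρ : ℝ)
    (H : EuclideanSpace ℝ (Fin d) → EuclideanSpace ℝ (Fin d) → Matrix (Fin d) (Fin d) ℝ → ℝ)
    (S : Set (EuclideanSpace ℝ (Fin d))) (w : ℝ → EuclideanSpace ℝ (Fin d) → ℝ) : Prop :=
  ∀ (φ φt : ℝ → EuclideanSpace ℝ (Fin d) → ℝ)
    (Dφ : ℝ → EuclideanSpace ℝ (Fin d) → EuclideanSpace ℝ (Fin d))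
    (D2φ : ℝ → EuclideanSpace ℝ (Fin d) → Matrix (Fin d) (Fin d) ℝ),
    IsC12 d φ φt Dφ D2φ → ∀ t₀ ∈ Ico (0 : ℝ) T, ∀ x₀ ∈ S,
      IsLocalMaxOn (fun z : ℝ × EuclideanSpace ℝ (Fin d) => w z.1 z.2 - φ z.1 z.2)
        (Icc 0 T ×ˢ S) (t₀, x₀) →
      ρ * w t₀ x₀ - φt t₀ x₀ + H x₀ (Dφ t₀ x₀) (D2φ t₀ x₀) ≤ 0

/-- `w` is a viscosity supersolution on `S` of `ρ φ - ∂ₜ φ + H(x, Dφ, D²φ) = 0`, tested at the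
times in `[0, T)` with local minima relative to `[0, T] × S`. -/
def IsViscositySupersolution (T ρ : ℝ)
    (H : EuclideanSpace ℝ (Fin d) → EuclideanSpace ℝ (Fin d) → Matrix (Fin d) (Fin d) ℝ → ℝ)
    (S : Set (EuclideanSpace ℝ (Fin d))) (w : ℝ → EuclideanSpace ℝ (Fin d) → ℝ) : Prop :=
  ∀ (φ φt : ℝ → EuclideanSpace ℝ (Fin d) → ℝ)
    (Dφ : ℝ → EuclideanSpace ℝ (Fin d) → EuclideanSpace ℝ (Fin d))
    (D2φ : ℝ → EuclideanSpace ℝ (Fin d) → Matrix (Fin d) (Fin d) ℝ),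
    IsC12 d φ φt Dφ D2φ → ∀ t₀ ∈ Ico (0 : ℝ) T, ∀ x₀ ∈ S,
      IsLocalMinOn (fun z : ℝ × EuclideanSpace ℝ (Fin d) => w z.1 z.2 - φ z.1 z.2)
        (Icc 0 T ×ˢ S) (t₀, x₀) →
      0 ≤ ρ * w t₀ x₀ - φt t₀ x₀ + H x₀ (Dφ t₀ x₀) (D2φ t₀ x₀)

lemma IsC12.neg {φ φt : ℝ → EuclideanSpace ℝ (Fin d) → ℝ}
    {Dφ : ℝ → EuclideanSpace ℝ (Fin d) → EuclideanSpace ℝ (Fin d)}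
    {D2φ : ℝ → EuclideanSpace ℝ (Fin d) → Matrix (Fin d) (Fin d) ℝ} (hφ : IsC12 d φ φt Dφ D2φ) :
    IsC12 d (fun t x => -φ t x) (fun t x => -φt t x) (fun t x => -Dφ t x)
      (fun t x => -D2φ t x) := by
  obtain ⟨htime, hgrad, hhess, hφt, hDφ, hD2φ⟩ := hφ
  refine ⟨fun t x => (htime t x).neg, fun t x => ?_, fun t x => ?_, hφt.neg, hDφ.neg, hD2φ.neg⟩
  · rw [hasGradientAt_iff_hasFDerivAt, map_neg]
    exact (hgrad t x).hasFDerivAt.neg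
  · obtain ⟨L, hL, hLmat⟩ := hhess t x
    exact ⟨-L, hL.neg, fun v i => by simp [hLmat]⟩

lemma IsViscositySupersolution.neg (hw : IsViscositySupersolution T ρ H S w) :
    IsViscositySubsolution T ρ (fun x p X => -H x (-p) (-X)) S (fun t x => -w t x) := by
  intro φ φt Dφ D2φ hφ t₀ ht₀ x₀ hx₀ hmax
  have hmin : IsLocalMinOn (fun z : ℝ × EuclideanSpace ℝ (Fin d) => w z.1 z.2 - -φ z.1 z.2)
      (Icc 0 T ×ˢ S) (t₀, x₀) := by
    filter_upwards [hmax] with z hz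
    linarith
  have hle := hw _ _ _ _ hφ.neg t₀ ht₀ x₀ hx₀ hmin
  linarith

/-- The space-time cylinder `[0, T] × S`. -/
def cylinder (T : ℝ) (S : Set (EuclideanSpace ℝ (Fin d))) : Set (SpaceTime d) :=
  {z | z.fst ∈ Icc 0 T ∧ z.snd ∈ S}

lemma tendsto_toLp_nhdsWithin_cylinder (z : SpaceTime d) :
    Tendsto (WithLp.toLp 2) (𝓝[Icc 0 T ×ˢ S] (z.fst, z.snd)) (𝓝[cylinder T S] z) :=
  (WithLp.prod_continuous_toLp 2 ℝ (EuclideanSpace ℝ (Fin d))).continuousWithinAt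
    |>.tendsto_nhdsWithin fun _ hy => ⟨hy.1, hy.2⟩

lemma isClosed_cylinder (hS : IsClosed S) : IsClosed (cylinder T S) :=
  (isClosed_Icc.preimage (WithLp.fstL 2 ℝ ℝ (EuclideanSpace ℝ (Fin d))).continuous).inter
    (hS.preimage (WithLp.sndL 2 ℝ ℝ (EuclideanSpace ℝ (Fin d))).continuous)

lemma cylinder_closure_eventuallyEq (h𝒪 : IsOpen 𝒪) {z : SpaceTime d} (hz : z.snd ∈ 𝒪) :
    cylinder T (closure 𝒪) =ᶠ[𝓝 z] cylinder T 𝒪 := by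
  have hsnd := (WithLp.sndL 2 ℝ ℝ (EuclideanSpace ℝ (Fin d))).continuous.tendsto z
  filter_upwards [hsnd.eventually (h𝒪.mem_nhds hz)] with y hy
  exact propext (and_congr_right fun _ => ⟨fun _ => hy, fun _ => subset_closure hy⟩)

lemma upperSemicontinuousOn_of_subset_cylinder {K : Set (SpaceTime d)}
    (hw : UpperSemicontinuousOn (fun z : ℝ × EuclideanSpace ℝ (Fin d) => w z.1 z.2)
      (Icc 0 T ×ˢ S)) (hK : K ⊆ cylinder T S) :
    UpperSemicontinuousOn (fun z : SpaceTime d => w z.fst z.snd) K :=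
  hw.comp (WithLp.prod_continuous_ofLp 2 ℝ (EuclideanSpace ℝ (Fin d))).continuousOn
    fun _ hz => ⟨(hK hz).1, (hK hz).2⟩

lemma IsViscositySubsolution.le_of_mem_superjetGraph {K : Set (SpaceTime d)}
    {J : SpaceTime d × ℝ × SpaceTime d × (SpaceTime d →L[ℝ] SpaceTime d)}
    (hw : IsViscositySubsolution T ρ H S w)
    (hJ : J ∈ superjetGraph (fun z => w z.fst z.snd) K) (hJT : J.1.fst < T)
    (hK : K =ᶠ[𝓝 J.1] cylinder T S) :
    ρ * J.2.1 - J.2.2.1.fst + H J.1.snd J.2.2.1.snd (spatialHessian J.2.2.2) ≤ 0 := by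
  obtain ⟨z, v, p, X⟩ := J
  obtain ⟨hzK, hv, hX, hle⟩ := hJ
  dsimp only at *
  subst hv
  have hz : z ∈ cylinder T S := hK.self_of_nhds.mp hzK
  rw [nhdsWithin_eq_iff_eventuallyEq.mpr hK] at hle
  have hzero : (WithLp.toLp 2 (z.fst, z.snd) : SpaceTime d) - z = 0 := sub_self _
  have htest := hw _ _ _ _ (isC12_quadraticAt hX z p) z.fst ⟨hz.1.1, hJT⟩ z.snd hz.2 <| by
    filter_upwards [(tendsto_toLp_nhdsWithin_cylinder z).eventually hle] with y hy
    simp only [quadraticAt, hzero, map_zero, inner_zero_right, mul_zero, add_zero, sub_zero]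
    exact sub_le_iff_le_add.mpr (hy.trans_eq (add_assoc _ _ _))
  simpa only [hzero, map_zero, add_zero] using htest

lemma IsViscositySubsolution.le_of_mem_closure_superjetGraph {K : Set (SpaceTime d)}
    {J : SpaceTime d × ℝ × SpaceTime d × (SpaceTime d →L[ℝ] SpaceTime d)}
    (hw : IsViscositySubsolution T ρ H S w)
    (hH : Continuous fun z : EuclideanSpace ℝ (Fin d) × EuclideanSpace ℝ (Fin d) ×
      Matrix (Fin d) (Fin d) ℝ => H z.1 z.2.1 z.2.2)
    (hJ : J ∈ closure (superjetGraph (fun z => w z.fst z.snd) K)) (hJT : J.1.fst < T)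
    (hK : K =ᶠ[𝓝 J.1] cylinder T S) :
    ρ * J.2.1 - J.2.2.1.fst + H J.1.snd J.2.2.1.snd (spatialHessian J.2.2.2) ≤ 0 := by
  have hfst := (WithLp.fstL 2 ℝ ℝ (EuclideanSpace ℝ (Fin d))).continuous
  have hsnd := (WithLp.sndL 2 ℝ ℝ (EuclideanSpace ℝ (Fin d))).continuous
  have hcont : Continuous fun J : SpaceTime d × ℝ × SpaceTime d ×
      (SpaceTime d →L[ℝ] SpaceTime d) =>
      ρ * J.2.1 - J.2.2.1.fst + H J.1.snd J.2.2.1.snd (spatialHessian J.2.2.2) :=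
    ((continuous_const.mul continuous_snd.fst).sub (hfst.comp continuous_snd.snd.fst)).add
      (hH.comp ((hsnd.comp continuous_fst).prodMk ((hsnd.comp continuous_snd.snd.fst).prodMk
        (continuous_spatialHessian.comp continuous_snd.snd.snd))))
  have hnear : ∀ᶠ J' in 𝓝 J, J'.1.fst < T ∧ K =ᶠ[𝓝 J'.1] cylinder T S :=
    ((hfst.comp continuous_fst).tendsto J |>.eventually (gt_mem_nhds hJT)).and
      ((continuous_fst.tendsto J).eventually (eventually_eventually_nhds.mpr hK))
  refine (isClosed_Iic.preimage hcont).mem_of_frequently_of_tendsto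
    (((mem_closure_iff_frequently.mp hJ).and_eventually hnear).mono fun J' hJ' => ?_) tendsto_id
  exact hw.le_of_mem_superjetGraph hJ'.1 hJ'.2.1 hJ'.2.2

end ViscositySolutions

section Doubling

variable {E : Type*} [NormedAddCommGroup E] [InnerProductSpace ℝ E]

/-- The Hessian at `0` of `(h, k) ↦ s / 2 * ‖h - k‖ ^ 2 + 1 / 2 * ⟪R h, h⟫`, the pair `(h, k)` being
the family indexed by `Fin 2`. -/
def doublingHessian (s : ℝ) (R : E →L[ℝ] E) :
    (PiLp 2 fun _ : Fin 2 => E) →L[ℝ] PiLp 2 fun _ : Fin 2 => E :=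
  let proj := PiLp.proj (𝕜 := ℝ) 2 fun _ : Fin 2 => E
  singleL E 0 ∘L (s • (proj 0 - proj 1) + R ∘L proj 0) - singleL E 1 ∘L (s • (proj 0 - proj 1))

lemma doublingHessian_apply (s : ℝ) (R : E →L[ℝ] E) (h : PiLp 2 fun _ : Fin 2 => E) :
    doublingHessian s R h = WithLp.toLp 2 ![s • (h 0 - h 1) + R (h 0), -(s • (h 0 - h 1))] := by
  ext i
  fin_cases i <;> simp [doublingHessian, singleL_apply]

lemma inner_doublingHessian (s : ℝ) (R : E →L[ℝ] E) (h k : PiLp 2 fun _ : Fin 2 => E) :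
    ⟪doublingHessian s R h, k⟫_ℝ = s * ⟪h 0 - h 1, k 0 - k 1⟫_ℝ + ⟪R (h 0), k 0⟫_ℝ := by
  simp only [doublingHessian_apply, PiLp.inner_apply, Fin.sum_univ_two, Matrix.cons_val_zero,
    Matrix.cons_val_one, inner_add_left, inner_neg_left, real_inner_smul_left, inner_sub_right]
  ring

lemma norm_doublingHessian_sq (s : ℝ) (R : E →L[ℝ] E) (h : PiLp 2 fun _ : Fin 2 => E) :
    ‖doublingHessian s R h‖ ^ 2 = ‖s • (h 0 - h 1) + R (h 0)‖ ^ 2 + ‖s • (h 0 - h 1)‖ ^ 2 := by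
  simp [doublingHessian_apply, PiLp.norm_sq_eq_of_L2]

lemma isSymmetric_doublingHessian {R : E →L[ℝ] E} (hR : R.IsSymmetric) (s : ℝ) :
    (doublingHessian s R).IsSymmetric := fun h k => by
  rw [ContinuousLinearMap.coe_coe, real_inner_comm (doublingHessian s R k) h,
    inner_doublingHessian, inner_doublingHessian, real_inner_comm (h 0 - h 1) (k 0 - k 1)]
  exact congrArg _ ((hR _ _).trans (real_inner_comm _ _))

lemma exists_mem_closure_superjetGraph_of_penalized_max [FiniteDimensional ℝ E] {u v F : E → ℝ}
    {K : Set E} {R : E →L[ℝ] E} {p e z z' : E} {s η : ℝ} (hK : IsCompact K)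
    (hu : UpperSemicontinuousOn u K) (hv : UpperSemicontinuousOn v K) (hR : R.IsSymmetric)
    (hη : 0 < η) (hz : z ∈ K) (hz' : z' ∈ K)
    (hF : ∀ h, F (z + h) ≤ F z + ⟪p, h⟫_ℝ + 1 / 2 * ⟪R h, h⟫_ℝ)
    (hmax : ∀ ζ ∈ K, ∀ ζ' ∈ K, u ζ + v ζ' - F ζ - s / 2 * ‖ζ - ζ' + e‖ ^ 2 ≤
      u z + v z' - F z - s / 2 * ‖z - z' + e‖ ^ 2) :
    ∃ X Y : E →L[ℝ] E,
      (∀ h k, ⟪X h, h⟫_ℝ + ⟪Y k, k⟫_ℝ ≤ s * ‖h - k‖ ^ 2 + ⟪R h, h⟫_ℝ +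
        η * (‖s • (h - k) + R h‖ ^ 2 + ‖s • (h - k)‖ ^ 2)) ∧
      (z, u z, p + s • (z - z' + e), X) ∈ closure (superjetGraph u K) ∧
      (z', v z', -(s • (z - z' + e)), Y) ∈ closure (superjetGraph v K) := by
  obtain ⟨X, hX, hmem⟩ := exists_mem_closure_superjetGraph (u := ![u, v]) (x := ![z, z'])
    (p := ![p + s • (z - z' + e), -(s • (z - z' + e))]) (K := fun _ => K) (fun _ => hK)
    (Fin.forall_fin_two.mpr ⟨hu, hv⟩) (Fin.forall_fin_two.mpr ⟨hz, hz'⟩)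
    (isSymmetric_doublingHessian hR s) hη fun h hh => by
      have hle := hmax _ (hh 0) _ (hh 1)
      have hsq : ‖z + h 0 - (z' + h 1) + e‖ ^ 2 =
          ‖z - z' + e‖ ^ 2 + 2 * ⟪z - z' + e, h 0 - h 1⟫_ℝ + ‖h 0 - h 1‖ ^ 2 := by
        rw [← norm_add_sq_real]
        congr 2
        abel
      simp only [Matrix.cons_val_zero, Matrix.cons_val_one, hsq, inner_sub_right] at hle
      simp only [Fin.sum_univ_two, Matrix.cons_val_zero, Matrix.cons_val_one,
        inner_add_left p, inner_neg_left, real_inner_smul_left, inner_doublingHessian,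
        real_inner_self_eq_norm_sq]
      linarith [hF (h 0)]
  refine ⟨X 0, X 1, fun h k => ?_, hmem 0, hmem 1⟩
  simpa [inner_doublingHessian, norm_doublingHessian_sq, Fin.sum_univ_two] using
    hX (WithLp.toLp 2 ![h, k])

end Doubling

section MatrixInequality

variable {d : ℕ}

/-- The operator on space-time multiplying time by `a` and space by `b`. -/
def timeSpaceScaling (d : ℕ) (a b : ℝ) : SpaceTime d →L[ℝ] SpaceTime d :=
  (WithLp.prodContinuousLinearEquiv 2 ℝ ℝ (EuclideanSpace ℝ (Fin d))).symm.toContinuousLinearMap ∘L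
    ((a • ContinuousLinearMap.id ℝ ℝ).prodMap
      (b • ContinuousLinearMap.id ℝ (EuclideanSpace ℝ (Fin d)))) ∘L
    (WithLp.prodContinuousLinearEquiv 2 ℝ ℝ (EuclideanSpace ℝ (Fin d))).toContinuousLinearMap

lemma timeSpaceScaling_apply (a b : ℝ) (z : SpaceTime d) :
    timeSpaceScaling d a b z = WithLp.toLp 2 (a * z.fst, b • z.snd) := rfl

lemma isSymmetric_timeSpaceScaling (a b : ℝ) : (timeSpaceScaling d a b).IsSymmetric :=
  fun y z => by
    simp [timeSpaceScaling_apply, WithLp.prod_inner_apply, real_inner_smul_left,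
      real_inner_smul_right]
    ring

lemma norm_spaceInclusion_apply (h : EuclideanSpace ℝ (Fin d)) : ‖spaceInclusion d h‖ = ‖h‖ := by
  simp [spaceInclusion_apply]

lemma inner_spaceInclusion_apply (h k : EuclideanSpace ℝ (Fin d)) :
    ⟪spaceInclusion d h, spaceInclusion d k⟫_ℝ = ⟪h, k⟫_ℝ := by
  simp [spaceInclusion_apply, WithLp.prod_inner_apply]

lemma timeSpaceScaling_spaceInclusion (a b : ℝ) (h : EuclideanSpace ℝ (Fin d)) :
    timeSpaceScaling d a b (spaceInclusion d h) = spaceInclusion d (b • h) := by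
  rw [timeSpaceScaling_apply, spaceInclusion_apply, spaceInclusion_apply]
  simp

lemma dotProduct_sumElim (h k h' k' : EuclideanSpace ℝ (Fin d)) :
    Sum.elim h.ofLp k.ofLp ⬝ᵥ Sum.elim h'.ofLp k'.ofLp = ⟪h, h'⟫_ℝ + ⟪k, k'⟫_ℝ := by
  simp [dotProduct, PiLp.inner_apply, mul_comm]

lemma An_fromBlocks_mulVec (n b : ℝ) (h k : EuclideanSpace ℝ (Fin d)) :
    An d n (Matrix.fromBlocks (b • 1) 0 0 0) *ᵥ Sum.elim h.ofLp k.ofLp =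
      Sum.elim (n ^ 2 • (h - k) + b • h).ofLp (-(n ^ 2 • (h - k))).ofLp := by
  rw [An, Matrix.add_mulVec, Matrix.smul_mulVec, Matrix.fromBlocks_mulVec,
    Matrix.fromBlocks_mulVec]
  ext (i | i) <;> simp [Matrix.neg_mulVec, Matrix.smul_mulVec, -mul_eq_mul_left_iff] <;> ring

lemma dotProduct_An_fromBlocks_mulVec (n b : ℝ) (h k : EuclideanSpace ℝ (Fin d)) :
    Sum.elim h.ofLp k.ofLp ⬝ᵥ
      An d n (Matrix.fromBlocks (b • 1) 0 0 0) *ᵥ Sum.elim h.ofLp k.ofLp =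
      n ^ 2 * ‖h - k‖ ^ 2 + b * ⟪h, h⟫_ℝ := by
  rw [An_fromBlocks_mulVec, dotProduct_sumElim, inner_add_right, inner_neg_right,
    real_inner_smul_right, real_inner_smul_right, real_inner_smul_right,
    ← real_inner_self_eq_norm_sq (h - k), inner_sub_left]
  ring

lemma dotProduct_fromBlocks_spatialHessian_mulVec (X Y : SpaceTime d →L[ℝ] SpaceTime d)
    (h k : EuclideanSpace ℝ (Fin d)) :
    Sum.elim h.ofLp k.ofLp ⬝ᵥ
      Matrix.fromBlocks (spatialHessian X) 0 0 (spatialHessian Y) *ᵥ Sum.elim h.ofLp k.ofLp =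
      ⟪X (spaceInclusion d h), spaceInclusion d h⟫_ℝ +
        ⟪Y (spaceInclusion d k), spaceInclusion d k⟫_ℝ := by
  rw [← dotProduct_spatialHessian_mulVec, ← dotProduct_spatialHessian_mulVec,
    Matrix.fromBlocks_mulVec]
  simp [dotProduct]

lemma isHermitian_An_fromBlocks (n b : ℝ) :
    (An d n (Matrix.fromBlocks (b • 1) 0 0 0)).IsHermitian := by
  simp [An, Matrix.IsHermitian, Matrix.fromBlocks_transpose]

lemma norm_fromBlocks_smul_one_le {b : ℝ} (hb : 0 ≤ b) :
    ‖Matrix.fromBlocks (b • (1 : Matrix (Fin d) (Fin d) ℝ)) 0 0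
      (0 : Matrix (Fin d) (Fin d) ℝ)‖ ≤ b := by
  rw [Matrix.norm_le_iff hb]
  rintro (i | i) (j | j)
  · by_cases hij : i = j <;> simp [hij, abs_of_nonneg hb, hb]
  all_goals simpa using hb

lemma dotProduct_mul_self_mulVec {m : Type*} [Fintype m] {A : Matrix m m ℝ} (hA : A.IsHermitian)
    (v : m → ℝ) : v ⬝ᵥ (A * A) *ᵥ v = (A *ᵥ v) ⬝ᵥ (A *ᵥ v) := by
  rw [← Matrix.mulVec_mulVec, Matrix.dotProduct_mulVec, ← Matrix.mulVec_transpose,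
    ← Matrix.conjTranspose_eq_transpose_of_trivial, hA.eq]

lemma posSemidef_An_add_sub_fromBlocks {n a b η : ℝ} {X Y : SpaceTime d →L[ℝ] SpaceTime d}
    (hX : X.IsSymmetric) (hY : Y.IsSymmetric)
    (hXY : ∀ h k, ⟪X h, h⟫_ℝ + ⟪Y k, k⟫_ℝ ≤
      n ^ 2 * ‖h - k‖ ^ 2 + ⟪timeSpaceScaling d a b h, h⟫_ℝ +
        η * (‖n ^ 2 • (h - k) + timeSpaceScaling d a b h‖ ^ 2 + ‖n ^ 2 • (h - k)‖ ^ 2)) :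
    (An d n (Matrix.fromBlocks (b • 1) 0 0 0) +
      η • (An d n (Matrix.fromBlocks (b • 1) 0 0 0) *
        An d n (Matrix.fromBlocks (b • 1) 0 0 0)) -
      Matrix.fromBlocks (spatialHessian X) 0 0 (-(-spatialHessian Y))).PosSemidef := by
  have hmulVec := An_fromBlocks_mulVec (d := d) n b
  have hquad := dotProduct_An_fromBlocks_mulVec (d := d) n b
  have hA := isHermitian_An_fromBlocks (d := d) n b
  set A := An d n (Matrix.fromBlocks (b • 1) 0 0 0)
  rw [neg_neg]
  have hherm : (A + η • (A * A) -
      Matrix.fromBlocks (spatialHessian X) 0 0 (spatialHessian Y)).IsHermitian := by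
    refine (hA.add ?_).sub (.fromBlocks (isHermitian_spatialHessian hX) (by simp)
      (isHermitian_spatialHessian hY))
    rw [Matrix.IsHermitian, Matrix.conjTranspose_smul, Matrix.conjTranspose_mul, hA.eq,
      star_trivial]
  refine .of_dotProduct_mulVec_nonneg hherm fun v => ?_
  obtain ⟨h, k, rfl⟩ : ∃ h k : EuclideanSpace ℝ (Fin d), v = Sum.elim h.ofLp k.ofLp :=
    ⟨WithLp.toLp 2 (v ∘ Sum.inl), WithLp.toLp 2 (v ∘ Sum.inr), (Sum.elim_comp_inl_inr v).symm⟩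
  have hle := hXY (spaceInclusion d h) (spaceInclusion d k)
  rw [timeSpaceScaling_spaceInclusion, ← map_sub, ← map_smul, ← map_add,
    inner_spaceInclusion_apply, norm_spaceInclusion_apply, norm_spaceInclusion_apply,
    norm_spaceInclusion_apply, real_inner_smul_left] at hle
  rw [star_trivial, Matrix.sub_mulVec, Matrix.add_mulVec, Matrix.smul_mulVec, dotProduct_sub,
    dotProduct_add, dotProduct_smul, dotProduct_mul_self_mulVec hA, hquad, hmulVec,
    dotProduct_sumElim, inner_neg_neg, real_inner_self_eq_norm_sq (_ + _),
    real_inner_self_eq_norm_sq (_ • _), dotProduct_fromBlocks_spatialHessian_mulVec, smul_eq_mul]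
  linarith

end MatrixInequality

section StructuralEstimate

variable {d : ℕ} {𝒪 : Set (EuclideanSpace ℝ (Fin d))} {T ρ α : ℝ}
  {H : EuclideanSpace ℝ (Fin d) → EuclideanSpace ℝ (Fin d) → Matrix (Fin d) (Fin d) ℝ → ℝ}
  {w₁ w₂ : ℝ → EuclideanSpace ℝ (Fin d) → ℝ}

/-- The inequality of `AssumptionA1` with the constant `α` fixed. -/
def AssumptionA1With (d : ℕ) (𝒪 : Set (EuclideanSpace ℝ (Fin d)))
    (H : EuclideanSpace ℝ (Fin d) → EuclideanSpace ℝ (Fin d) →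
      Matrix (Fin d) (Fin d) ℝ → ℝ) (α : ℝ) : Prop :=
  ∀ x ∈ closure 𝒪, ∀ y ∈ closure 𝒪, ‖x - y‖ ≤ 1 →
    ∀ (p q : EuclideanSpace ℝ (Fin d)) (Q : Matrix (Fin d ⊕ Fin d) (Fin d ⊕ Fin d) ℝ)
      (Xη Yη : ℝ → Matrix (Fin d) (Fin d) ℝ) (n : ℝ), 1 ≤ n →
      (∀ η > (0 : ℝ),
        (An d n Q + η • (An d n Q * An d n Q) -
          Matrix.fromBlocks (Xη η) 0 0 (-(Yη η))).PosSemidef) →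
      liminf (fun η : ℝ => ((H y q (Yη η) - H x p (Xη η) : ℝ) : EReal)) (𝓝[>] 0) ≤
        ((α * (‖x - y‖ * (1 + ‖q‖ + n ^ 2 * ‖x - y‖) + (1 + ‖x‖) * ‖p - q‖ +
          (1 + ‖x‖ ^ 2) * ‖Q‖) : ℝ) : EReal)

lemma AssumptionA1With.le_of_forall_le_sub (hA : AssumptionA1With d 𝒪 H α) (hα : 0 < α)
    {x y p q : EuclideanSpace ℝ (Fin d)} (hx : x ∈ closure 𝒪) (hy : y ∈ closure 𝒪)
    (hxy : ‖x - y‖ ≤ 1) {n a b C : ℝ} (hn : 1 ≤ n) (hb : 0 ≤ b)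
    {X Y : ℝ → SpaceTime d →L[ℝ] SpaceTime d} (hX : ∀ η > 0, (X η).IsSymmetric)
    (hY : ∀ η > 0, (Y η).IsSymmetric)
    (hXY : ∀ η > 0, ∀ h k, ⟪X η h, h⟫_ℝ + ⟪Y η k, k⟫_ℝ ≤
      n ^ 2 * ‖h - k‖ ^ 2 + ⟪timeSpaceScaling d a b h, h⟫_ℝ +
        η * (‖n ^ 2 • (h - k) + timeSpaceScaling d a b h‖ ^ 2 + ‖n ^ 2 • (h - k)‖ ^ 2))
    (hC : ∀ η > 0, C ≤ H y q (-spatialHessian (Y η)) - H x p (spatialHessian (X η))) :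
    C ≤ α * (‖x - y‖ * (1 + ‖q‖ + n ^ 2 * ‖x - y‖) + (1 + ‖x‖) * ‖p - q‖ +
      (1 + ‖x‖ ^ 2) * b) := by
  have hliminf := hA x hx y hy hxy p q (Matrix.fromBlocks (b • 1) 0 0 0)
    (fun η => spatialHessian (X η)) (fun η => -spatialHessian (Y η)) n hn fun η hη =>
      posSemidef_An_add_sub_fromBlocks (hX η hη) (hY η hη) (hXY η hη)
  have hC_le : (C : EReal) ≤ liminf (fun η : ℝ => ((H y q (-spatialHessian (Y η)) -
      H x p (spatialHessian (X η)) : ℝ) : EReal)) (𝓝[>] 0) :=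
    le_liminf_of_le (by isBoundedDefault) <| eventually_mem_nhdsWithin.mono fun η hη =>
      EReal.coe_le_coe_iff.mpr (hC η hη)
  refine (EReal.coe_le_coe_iff.mp (hC_le.trans hliminf)).trans ?_
  have hQ := norm_fromBlocks_smul_one_le (d := d) hb
  gcongr

lemma AssumptionA1With.le_of_penalized_max (hA : AssumptionA1With d 𝒪 H α) (hα : 0 < α)
    (h𝒪 : IsOpen 𝒪)
    (hH : Continuous fun z : EuclideanSpace ℝ (Fin d) × EuclideanSpace ℝ (Fin d) ×
      Matrix (Fin d) (Fin d) ℝ => H z.1 z.2.1 z.2.2)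
    (hw₁ : IsViscositySubsolution T ρ H (closure 𝒪) w₁)
    (hw₂ : IsViscositySupersolution T ρ H 𝒪 w₂) {K : Set (SpaceTime d)} (hK : IsCompact K)
    (hw₁K : UpperSemicontinuousOn (fun z : SpaceTime d => w₁ z.fst z.snd) K)
    (hw₂K : UpperSemicontinuousOn (fun z : SpaceTime d => -w₂ z.fst z.snd) K)
    {n a b : ℝ} (hn : 1 ≤ n) (hb : 0 ≤ b) {z₀ π e z z' : SpaceTime d} (hz : z ∈ K) (hz' : z' ∈ K)
    (hmax : ∀ ζ ∈ K, ∀ ζ' ∈ K,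
      w₁ ζ.fst ζ.snd + -w₂ ζ'.fst ζ'.snd - quadraticAt z₀ π (timeSpaceScaling d a b) ζ -
        n ^ 2 / 2 * ‖ζ - ζ' + e‖ ^ 2 ≤
      w₁ z.fst z.snd + -w₂ z'.fst z'.snd - quadraticAt z₀ π (timeSpaceScaling d a b) z -
        n ^ 2 / 2 * ‖z - z' + e‖ ^ 2)
    (hKz : K =ᶠ[𝓝 z] cylinder T (closure 𝒪)) (hKz' : K =ᶠ[𝓝 z'] cylinder T (closure 𝒪))
    (hzT : z.fst < T) (hzT' : z'.fst < T) (hz'𝒪 : z'.snd ∈ 𝒪) (hzz' : ‖z.snd - z'.snd‖ ≤ 1) :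
    ρ * (w₁ z.fst z.snd - w₂ z'.fst z'.snd) - (π + timeSpaceScaling d a b (z - z₀)).fst ≤
      α * (‖z.snd - z'.snd‖ *
          (1 + ‖n ^ 2 • (z.snd - z'.snd + e.snd)‖ + n ^ 2 * ‖z.snd - z'.snd‖) +
        (1 + ‖z.snd‖) * ‖(π + timeSpaceScaling d a b (z - z₀)).snd‖ + (1 + ‖z.snd‖ ^ 2) * b) := by
  have hR := isSymmetric_timeSpaceScaling (d := d) a b
  choose! X Y hXY hzX hzY using fun (η : ℝ) (hη : 0 < η) =>
    exists_mem_closure_superjetGraph_of_penalized_max hK hw₁K hw₂K hR hη hz hz'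
      (fun h => (quadraticAt_add hR z₀ π z h).le) hmax
  have hle (η : ℝ) (hη : 0 < η) :
      ρ * (w₁ z.fst z.snd - w₂ z'.fst z'.snd) - (π + timeSpaceScaling d a b (z - z₀)).fst ≤
        H z'.snd (n ^ 2 • (z - z' + e)).snd (-spatialHessian (Y η)) -
          H z.snd (π + timeSpaceScaling d a b (z - z₀) + n ^ 2 • (z - z' + e)).snd
            (spatialHessian (X η)) := by
    have hsub := hw₁.le_of_mem_closure_superjetGraph hH (hzX η hη) hzT hKz
    have hsuper := hw₂.neg.le_of_mem_closure_superjetGraph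
      (hH.comp (continuous_fst.prodMk (continuous_snd.fst.neg.prodMk continuous_snd.snd.neg))).neg
      (hzY η hη) hzT' (hKz'.trans (cylinder_closure_eventuallyEq h𝒪 hz'𝒪))
    simp only [WithLp.add_fst, WithLp.neg_fst, WithLp.neg_snd, neg_neg] at hsub hsuper ⊢
    linarith
  have hz𝒪 : z.snd ∈ closure 𝒪 := (hKz.self_of_nhds.mp hz).2
  simpa using hA.le_of_forall_le_sub hα hz𝒪 (subset_closure hz'𝒪) hzz' hn hb
    (fun η hη => isSymmetric_of_mem_closure_superjetGraph (hzX η hη))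
    (fun η hη => isSymmetric_of_mem_closure_superjetGraph (hzY η hη)) hXY hle

end StructuralEstimate

section PenalizedMaximizers

variable {ι E : Type*} [NormedAddCommGroup E] {K : Set E} {G : E × E → ℝ} {l : Filter ι}
  {β g : ι → ℝ} {z₀ : E} {e z z' : ι → E}

lemma exists_penalized_max (hK : IsCompact K) (hne : K.Nonempty)
    (hG : UpperSemicontinuousOn G (K ×ˢ K)) (β : ℝ) (e : E) :
    ∃ z ∈ K, ∃ z' ∈ K, ∀ ζ ∈ K, ∀ ζ' ∈ K,
      G (ζ, ζ') - β / 2 * ‖ζ - ζ' + e‖ ^ 2 ≤ G (z, z') - β / 2 * ‖z - z' + e‖ ^ 2 := by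
  have hpenalty : ContinuousOn (fun ζ : E × E => -(β / 2 * ‖ζ.1 - ζ.2 + e‖ ^ 2)) (K ×ˢ K) := by
    fun_prop
  obtain ⟨ζ, hζ, hmax⟩ := UpperSemicontinuousOn.exists_isMaxOn (hne.prod hne) (hK.prod hK)
    (hG.add hpenalty.upperSemicontinuousOn)
  refine ⟨ζ.1, hζ.1, ζ.2, hζ.2, fun y hy y' hy' => ?_⟩
  simpa only [mem_ofPred_eq, ← sub_eq_add_neg] using hmax (mk_mem_prod hy hy')

lemma tendsto_penalized_difference (hK : IsCompact K) (hG : UpperSemicontinuousOn G (K ×ˢ K))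
    (hβ : Tendsto β l atTop) (hg : Tendsto g l (𝓝 (G (z₀, z₀)))) (hz : ∀ i, z i ∈ K)
    (hz' : ∀ i, z' i ∈ K)
    (hle : ∀ᶠ i in l, g i + β i / 2 * ‖z i - z' i + e i‖ ^ 2 ≤ G (z i, z' i)) :
    Tendsto (fun i => z i - z' i + e i) l (𝓝 0) := by
  obtain ⟨M, hM⟩ := UpperSemicontinuousOn.bddAbove_of_isCompact (hK.prod hK) hG
  have hsq : Tendsto (fun i => ‖z i - z' i + e i‖ ^ 2) l (𝓝 0) := by
    refine squeeze_zero' (.of_forall fun _ => by positivity) ?_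
      (hβ.const_div_atTop (2 * (M - (G (z₀, z₀) - 1))))
    filter_upwards [hle, hβ.eventually_gt_atTop 0, hg.eventually (lt_mem_nhds (sub_one_lt _))]
      with i hi hβi hgi
    have hMi : G (z i, z' i) ≤ M := hM ⟨_, ⟨hz i, hz' i⟩, rfl⟩
    rw [le_div_iff₀ hβi]
    linarith
  rw [tendsto_zero_iff_norm_tendsto_zero]
  simpa using hsq.sqrt

lemma tendsto_fst_of_penalized_le (hK : IsCompact K) (hG : UpperSemicontinuousOn G (K ×ˢ K))
    (hstrict : ∀ ζ ∈ K, ζ ≠ z₀ → G (ζ, ζ) < G (z₀, z₀)) (he : Tendsto e l (𝓝 0))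
    (hβ : Tendsto β l atTop) (hg : Tendsto g l (𝓝 (G (z₀, z₀)))) (hz : ∀ i, z i ∈ K)
    (hz' : ∀ i, z' i ∈ K)
    (hle : ∀ᶠ i in l, g i + β i / 2 * ‖z i - z' i + e i‖ ^ 2 ≤ G (z i, z' i)) :
    Tendsto z l (𝓝 z₀) := by
  have hdiff := he.sub (tendsto_penalized_difference hK hG hβ hg hz hz' hle)
  refine hK.tendsto_nhds_of_unique_mapClusterPt (.of_forall hz) fun y hy hcluster => ?_
  by_contra hne
  let l' := comap z (𝓝 y) ⊓ l
  have : l'.NeBot := neBot_inf_comap_iff_map'.mpr hcluster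
  have hl' : l' ≤ l := inf_le_right
  have hzy : Tendsto z l' (𝓝 y) := tendsto_comap.mono_left inf_le_left
  have hzy' : Tendsto z' l' (𝓝 y) := by
    simpa using hzy.add (hdiff.mono_left hl')
  have hzz' : Tendsto (fun i => (z i, z' i)) l' (𝓝[K ×ˢ K] (y, y)) :=
    tendsto_nhdsWithin_iff.mpr ⟨hzy.prodMk_nhds hzy', .of_forall fun i => ⟨hz i, hz' i⟩⟩
  obtain ⟨b, hyb, hb⟩ := exists_between (hstrict y hy hne)
  obtain ⟨i, hGi, hgi, hi, hβi⟩ := ((hzz'.eventually (hG _ ⟨hy, hy⟩ b hyb)).and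
    (((hg.eventually (lt_mem_nhds hb)).and (hle.and (hβ.eventually_ge_atTop 0))).filter_mono
      hl')).exists
  have hpenalty : 0 ≤ β i / 2 * ‖z i - z' i + e i‖ ^ 2 := by positivity
  linarith

lemma tendsto_snd_of_penalized_le (hK : IsCompact K) (hG : UpperSemicontinuousOn G (K ×ˢ K))
    (hstrict : ∀ ζ ∈ K, ζ ≠ z₀ → G (ζ, ζ) < G (z₀, z₀)) (he : Tendsto e l (𝓝 0))
    (hβ : Tendsto β l atTop) (hg : Tendsto g l (𝓝 (G (z₀, z₀)))) (hz : ∀ i, z i ∈ K)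
    (hz' : ∀ i, z' i ∈ K)
    (hle : ∀ᶠ i in l, g i + β i / 2 * ‖z i - z' i + e i‖ ^ 2 ≤ G (z i, z' i)) :
    Tendsto z' l (𝓝 z₀) := by
  simpa using (tendsto_fst_of_penalized_le hK hG hstrict he hβ hg hz hz' hle).add
    (he.sub (tendsto_penalized_difference hK hG hβ hg hz hz' hle))

lemma tendsto_penalty (hG : UpperSemicontinuousOn G (K ×ˢ K)) (hz₀ : z₀ ∈ K)
    (hβ : Tendsto β l atTop) (hg : Tendsto g l (𝓝 (G (z₀, z₀)))) (hz : ∀ i, z i ∈ K)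
    (hz' : ∀ i, z' i ∈ K) (hzz₀ : Tendsto z l (𝓝 z₀)) (hz'z₀ : Tendsto z' l (𝓝 z₀))
    (hle : ∀ᶠ i in l, g i + β i / 2 * ‖z i - z' i + e i‖ ^ 2 ≤ G (z i, z' i)) :
    Tendsto (fun i => β i * ‖z i - z' i + e i‖ ^ 2) l (𝓝 0) := by
  have hzz' : Tendsto (fun i => (z i, z' i)) l (𝓝[K ×ˢ K] (z₀, z₀)) :=
    tendsto_nhdsWithin_iff.mpr ⟨hzz₀.prodMk_nhds hz'z₀, .of_forall fun i => ⟨hz i, hz' i⟩⟩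
  refine tendsto_order.mpr ⟨fun b hb => ?_, fun b hb => ?_⟩
  · filter_upwards [hβ.eventually_ge_atTop 0] with i hβi
    exact hb.trans_le (by positivity)
  · filter_upwards [hle, hg.eventually (lt_mem_nhds (sub_lt_self _ (by positivity : 0 < b / 4))),
      hzz'.eventually (hG _ ⟨hz₀, hz₀⟩ _ (lt_add_of_pos_right _ (by positivity : 0 < b / 4)))]
      with i hi hgi hGi
    linarith

lemma isLittleO_id_of_tendsto_const_div_sq_mul {f : ℝ → E} {l : Filter ℝ} {κ : ℝ} (hκ : 0 < κ)
    (hl : l ≤ 𝓝[>] 0) (hf : Tendsto (fun ε => κ / ε ^ 2 * ‖f ε‖ ^ 2) l (𝓝 0)) : f =o[l] id := by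
  rw [isLittleO_iff]
  intro c hc
  filter_upwards [hf.eventually (gt_mem_nhds (by positivity : 0 < κ * c ^ 2)),
    hl eventually_mem_nhdsWithin] with ε hlt (hε : 0 < ε)
  refine le_of_sq_le_sq ?_ (by positivity)
  rw [id, Real.norm_of_nonneg hε.le, mul_pow]
  rw [div_mul_eq_mul_div, div_lt_iff₀ (by positivity), mul_assoc] at hlt
  exact (lt_of_mul_lt_mul_left hlt hκ.le).le

lemma exists_penalized_max_family {l : Filter ℝ} {e : ℝ → E} {κ : ℝ} (hK : IsCompact K)
    (hG : UpperSemicontinuousOn G (K ×ˢ K)) (hz₀ : z₀ ∈ K)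
    (hstrict : ∀ ζ ∈ K, ζ ≠ z₀ → G (ζ, ζ) < G (z₀, z₀)) (hl : l ≤ 𝓝[>] 0)
    (he : Tendsto e l (𝓝 0)) (heK : ∀ᶠ ε in l, z₀ + e ε ∈ K)
    (hGe : Tendsto (fun ε => G (z₀, z₀ + e ε)) l (𝓝 (G (z₀, z₀)))) (hκ : 0 < κ) :
    ∃ z z' : ℝ → E, (∀ ε, z ε ∈ K) ∧ (∀ ε, z' ε ∈ K) ∧
      (∀ ε, ∀ ζ ∈ K, ∀ ζ' ∈ K, G (ζ, ζ') - κ / ε ^ 2 / 2 * ‖ζ - ζ' + e ε‖ ^ 2 ≤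
        G (z ε, z' ε) - κ / ε ^ 2 / 2 * ‖z ε - z' ε + e ε‖ ^ 2) ∧
      Tendsto z l (𝓝 z₀) ∧ Tendsto z' l (𝓝 z₀) ∧ (fun ε => z ε - z' ε + e ε) =o[l] id ∧
      ∀ᶠ ε in l, G (z₀, z₀ + e ε) ≤ G (z ε, z' ε) := by
  choose z hz z' hz' hmax using fun ε => exists_penalized_max hK ⟨z₀, hz₀⟩ hG (κ / ε ^ 2) (e ε)
  have hβ : Tendsto (fun ε : ℝ => κ / ε ^ 2) l atTop := by
    simp only [div_eq_mul_inv, ← inv_pow]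
    exact (((tendsto_pow_atTop two_ne_zero).comp tendsto_inv_nhdsGT_zero).const_mul_atTop hκ)
      |>.mono_left hl
  have hle : ∀ᶠ ε in l,
      G (z₀, z₀ + e ε) + κ / ε ^ 2 / 2 * ‖z ε - z' ε + e ε‖ ^ 2 ≤ G (z ε, z' ε) := by
    filter_upwards [heK] with ε hε
    simpa [le_sub_iff_add_le] using hmax ε z₀ hz₀ _ hε
  have hzz₀ := tendsto_fst_of_penalized_le hK hG hstrict he hβ hGe hz hz' hle
  have hz'z₀ := tendsto_snd_of_penalized_le hK hG hstrict he hβ hGe hz hz' hle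
  refine ⟨z, z', hz, hz', hmax, hzz₀, hz'z₀, isLittleO_id_of_tendsto_const_div_sq_mul hκ hl
    (tendsto_penalty hG hz₀ hβ hGe hz hz' hzz₀ hz'z₀ hle), hle.mono fun ε hε => ?_⟩
  exact (le_add_of_nonneg_right (by positivity)).trans hε

end PenalizedMaximizers

section InwardPerturbation

variable {d : ℕ} {T C : ℝ} {𝒪 : Set (EuclideanSpace ℝ (Fin d))}
  {w : ℝ → EuclideanSpace ℝ (Fin d) → ℝ} {z₀ : SpaceTime d} {l : Filter ℝ}
  {e : ℝ → SpaceTime d}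

/-- A family `e ε` of space-time shifts at `z₀`, of spatial size at most `C ε`, along which `w` is
continuous and which pushes `closure 𝒪` into `𝒪` near `z₀` with a margin of order `ε`: a further
spatial shift of size `o(ε)` is harmless. The filter `l` selects the `ε` along which the bound `C ε`
holds, which in `ClassR` need not be all small `ε`. -/
structure IsInwardPerturbation (C : ℝ) (𝒪 : Set (EuclideanSpace ℝ (Fin d)))
    (w : ℝ → EuclideanSpace ℝ (Fin d) → ℝ) (z₀ : SpaceTime d) (l : Filter ℝ)
    (e : ℝ → SpaceTime d) : Prop where
  le_nhdsGT : l ≤ 𝓝[>] 0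
  norm_snd_le : ∀ᶠ ε in l, ‖(e ε).snd‖ ≤ C * ε
  fst_nonneg : ∀ᶠ ε in l, 0 ≤ (e ε).fst
  tendsto_fst : Tendsto (fun ε => (e ε).fst) l (𝓝 0)
  tendsto_apply : Tendsto (fun ε => w (z₀ + e ε).fst (z₀ + e ε).snd) l (𝓝 (w z₀.fst z₀.snd))
  mem : ∀ y ψ : ℝ → EuclideanSpace ℝ (Fin d), (∀ᶠ ε in l, y ε ∈ closure 𝒪) →
    Tendsto y l (𝓝 z₀.snd) → ψ =o[l] id → ∀ᶠ ε in l, y ε + (e ε).snd + ψ ε ∈ 𝒪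

namespace IsInwardPerturbation

lemma tendsto_id (he : IsInwardPerturbation C 𝒪 w z₀ l e) : Tendsto id l (𝓝 0) :=
  Filter.tendsto_id.mono_left (he.le_nhdsGT.trans nhdsWithin_le_nhds)

lemma tendsto_zero (he : IsInwardPerturbation C 𝒪 w z₀ l e) : Tendsto e l (𝓝 0) := by
  have hsnd : Tendsto (fun ε => (e ε).snd) l (𝓝 0) :=
    squeeze_zero_norm' he.norm_snd_le (by simpa using he.tendsto_id.const_mul C)
  exact ((WithLp.prod_continuous_toLp 2 ℝ (EuclideanSpace ℝ (Fin d))).tendsto (0, 0)).comp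
    (he.tendsto_fst.prodMk_nhds hsnd)

end IsInwardPerturbation

lemma isInwardPerturbation_zero (h𝒪 : IsOpen 𝒪) (hz₀ : z₀.snd ∈ 𝒪) :
    IsInwardPerturbation 0 𝒪 w z₀ (𝓝[>] 0) 0 where
  le_nhdsGT := le_rfl
  norm_snd_le := by simp
  fst_nonneg := by simp
  tendsto_fst := tendsto_const_nhds
  tendsto_apply := by simp
  mem y ψ _ hy hψ := by
    have hψ₀ : Tendsto ψ (𝓝[>] 0) (𝓝 0) :=
      hψ.trans_tendsto (tendsto_id.mono_left nhdsWithin_le_nhds)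
    have hadd : Tendsto (fun ε => y ε + ((0 : ℝ → SpaceTime d) ε).snd + ψ ε) (𝓝[>] 0)
        (𝓝 z₀.snd) := by simpa using hy.add hψ₀
    exact hadd.eventually (h𝒪.mem_nhds hz₀)

lemma isLittleO_indicator_of_inf_principal {F : Type*} [NormedAddCommGroup F] {l : Filter ℝ}
    {s : Set ℝ} {ψ : ℝ → F} (hψ : ψ =o[l ⊓ 𝓟 s] id) : s.indicator ψ =o[l] id := by
  rw [isLittleO_iff] at hψ ⊢
  intro c hc
  filter_upwards [eventually_inf_principal.mp (hψ hc)] with ε hε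
  by_cases hs : ε ∈ s
  · simpa [hs] using hε hs
  · simp only [hs, not_false_eq_true, indicator_of_notMem, norm_zero]
    positivity

lemma ClassR.exists_isInwardPerturbation_of_mem_frontier (hw : ClassR d T 𝒪 w)
    (ht : z₀.fst ∈ Ico 0 T) (hz₀ : z₀.snd ∈ frontier 𝒪) :
    ∃ C l e, 0 ≤ C ∧ NeBot l ∧ IsInwardPerturbation C 𝒪 w z₀ l e := by
  obtain ⟨r, hr, B, hB, hzB, ℓ, hℓ, hmem, lam, hlam, hlam₀, hwlim⟩ := hw _ ht _ hz₀
  obtain ⟨C, hC, hC_top⟩ := exists_between hℓ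
  have hfreq : ∃ᶠ ε in 𝓝[>] (0 : ℝ), ‖ℓ ε‖ ≤ C.toReal * ε := by
    refine ((frequently_lt_of_liminf_lt (by isBoundedDefault) hC).and_eventually
      eventually_mem_nhdsWithin).mono fun ε ⟨hlt, hε⟩ => ?_
    have hεℓ := (ENNReal.ofReal_le_iff_le_toReal hC_top.ne).mp hlt.le
    rwa [inv_mul_le_iff₀ hε, mul_comm] at hεℓ
  have hl : 𝓝[>] 0 ⊓ 𝓟 {ε | ‖ℓ ε‖ ≤ C.toReal * ε} ≤ 𝓝[>] (0 : ℝ) := inf_le_left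
  have hself : ∀ᶠ ε in 𝓝[>] 0 ⊓ 𝓟 {ε | ‖ℓ ε‖ ≤ C.toReal * ε}, ‖ℓ ε‖ ≤ C.toReal * ε :=
    mem_inf_of_right (mem_principal_self _)
  refine ⟨C.toReal, 𝓝[>] 0 ⊓ 𝓟 {ε | ‖ℓ ε‖ ≤ C.toReal * ε}, fun ε => WithLp.toLp 2 (lam ε, ℓ ε),
    ENNReal.toReal_nonneg, frequently_iff_neBot.mp hfreq, hl, hself,
    hl (eventually_mem_nhdsWithin.mono hlam), hlam₀.mono_left hl, hwlim.mono_left hl,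
    fun y ψ hy𝒪 hy hψ => ?_⟩
  obtain ⟨r', hr', hmem'⟩ := hmem _ (isLittleO_indicator_of_inf_principal hψ)
  filter_upwards [hl (Ioo_mem_nhdsGT (lt_min hr hr')), hself, hy𝒪, hy.eventually (hB.mem_nhds hzB)]
    with ε hε hℓε hyε hyB
  simpa [hℓε] using hmem' (y ε) ⟨hyε, hyB⟩ ε hε

lemma ClassR.exists_isInwardPerturbation (hw : ClassR d T 𝒪 w) (h𝒪 : IsOpen 𝒪)
    (hz₀ : z₀ ∈ cylinder T (closure 𝒪)) (hz₀T : z₀.fst < T) :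
    ∃ C l e, 0 ≤ C ∧ NeBot l ∧ IsInwardPerturbation C 𝒪 w z₀ l e := by
  by_cases hmem : z₀.snd ∈ 𝒪
  · exact ⟨0, 𝓝[>] 0, 0, le_rfl, inferInstance, isInwardPerturbation_zero h𝒪 hmem⟩
  · refine hw.exists_isInwardPerturbation_of_mem_frontier ⟨hz₀.1.1, hz₀T⟩ ?_
    exact (closure_eq_self_union_frontier 𝒪 ▸ hz₀.2).resolve_left hmem

end InwardPerturbation

section LocalEstimate

variable {d : ℕ} {𝒪 : Set (EuclideanSpace ℝ (Fin d))} {T ρ α C κ a b r : ℝ}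
  {H : EuclideanSpace ℝ (Fin d) → EuclideanSpace ℝ (Fin d) → Matrix (Fin d) (Fin d) ℝ → ℝ}
  {w w₁ w₂ : ℝ → EuclideanSpace ℝ (Fin d) → ℝ} {z₀ π : SpaceTime d} {l : Filter ℝ}
  {e z z' : ℝ → SpaceTime d} {K : Set (SpaceTime d)}

lemma inter_closedBall_eventuallyEq {X : Type*} [PseudoMetricSpace X] (s : Set X) {x y : X} {r : ℝ}
    (hy : y ∈ Metric.ball x r) : (s ∩ Metric.closedBall x r : Set X) =ᶠ[𝓝 y] s := by
  filter_upwards [Metric.isOpen_ball.mem_nhds hy] with ζ hζ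
  exact propext (and_iff_left (Metric.ball_subset_closedBall hζ))

namespace IsInwardPerturbation

lemma eventually_snd_mem (he : IsInwardPerturbation C 𝒪 w z₀ l e)
    (hz : ∀ ε, z ε ∈ cylinder T (closure 𝒪)) (hzz₀ : Tendsto z l (𝓝 z₀))
    (hdiff : (fun ε => z ε - z' ε + e ε) =o[l] id) : ∀ᶠ ε in l, (z' ε).snd ∈ 𝒪 := by
  have hsnd : (fun ε => -(z ε - z' ε + e ε).snd) =o[l] id :=
    IsBigO.trans_isLittleO (.of_bound 1 (.of_forall fun ε => by
      simpa only [norm_neg, one_mul] using SpaceTime.norm_snd_le _)) hdiff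
  filter_upwards [he.mem (fun ε => (z ε).snd) _ (.of_forall fun ε => (hz ε).2)
    (((WithLp.sndL 2 ℝ ℝ (EuclideanSpace ℝ (Fin d))).continuous.tendsto z₀).comp hzz₀) hsnd]
    with ε hε
  simpa using hε

lemma eventually_add_mem_cylinder (he : IsInwardPerturbation C 𝒪 w z₀ l e)
    (hz₀ : z₀ ∈ cylinder T (closure 𝒪)) (hz₀T : z₀.fst < T) :
    ∀ᶠ ε in l, z₀ + e ε ∈ cylinder T (closure 𝒪) := by
  filter_upwards [he.fst_nonneg, he.tendsto_fst.eventually (gt_mem_nhds (sub_pos.mpr hz₀T)),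
    he.mem (fun _ => z₀.snd) 0 (.of_forall fun _ => hz₀.2) tendsto_const_nhds (isLittleO_zero _ _)]
    with ε hnonneg hlt hmem
  refine ⟨⟨add_nonneg hz₀.1.1 hnonneg, (lt_sub_iff_add_lt'.mp hlt).le⟩, subset_closure ?_⟩
  simpa using hmem

end IsInwardPerturbation

lemma penalized_gap_le {E : Type*} [NormedAddCommGroup E] [NormedSpace ℝ E] {C κ ε : ℝ}
    (hC : 0 ≤ C) (hκ : 0 < κ) (hε : 0 < ε) {v e : E} (hve : ‖v + e‖ ≤ ε) (he : ‖e‖ ≤ C * ε) :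
    ‖v‖ * (1 + ‖(κ / ε ^ 2) • (v + e)‖ + κ / ε ^ 2 * ‖v‖) ≤
      (C + 1) * ε + κ * ((C + 1) + (C + 1) ^ 2) := by
  have hv : ‖v‖ ≤ (C + 1) * ε := by
    linarith [norm_sub_le (v + e) e, congrArg norm (add_sub_cancel_right v e)]
  have hsmul : ‖(κ / ε ^ 2) • (v + e)‖ ≤ κ / ε := by
    rw [norm_smul, Real.norm_of_nonneg (by positivity)]
    calc κ / ε ^ 2 * ‖v + e‖ ≤ κ / ε ^ 2 * ε := by gcongr
      _ = κ / ε := by field_simp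
  calc ‖v‖ * (1 + ‖(κ / ε ^ 2) • (v + e)‖ + κ / ε ^ 2 * ‖v‖)
      ≤ (C + 1) * ε * (1 + κ / ε + κ / ε ^ 2 * ((C + 1) * ε)) := by gcongr
    _ = (C + 1) * ε + κ * ((C + 1) + (C + 1) ^ 2) := by field_simp; ring

lemma upperSemicontinuousOn_doubled (hK : K ⊆ cylinder T (closure 𝒪))
    (hw₁ : UpperSemicontinuousOn (fun z : ℝ × EuclideanSpace ℝ (Fin d) => w₁ z.1 z.2)
      (Icc 0 T ×ˢ closure 𝒪))
    (hw₂ : LowerSemicontinuousOn (fun z : ℝ × EuclideanSpace ℝ (Fin d) => w₂ z.1 z.2)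
      (Icc 0 T ×ˢ closure 𝒪)) {F : SpaceTime d → ℝ} (hF : Continuous F) :
    UpperSemicontinuousOn (fun ζ : SpaceTime d × SpaceTime d =>
      w₁ ζ.1.fst ζ.1.snd + -w₂ ζ.2.fst ζ.2.snd - F ζ.1) (K ×ˢ K) := by
  have hF' : ContinuousOn (fun ζ : SpaceTime d × SpaceTime d => -F ζ.1) (K ×ˢ K) := by fun_prop
  exact (((upperSemicontinuousOn_of_subset_cylinder hw₁ hK).comp continuousOn_fst
    fun _ hζ => hζ.1).add ((upperSemicontinuousOn_of_subset_cylinder (w := fun t x => -w₂ t x)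
      hw₂.neg hK).comp continuousOn_snd fun _ hζ => hζ.2)).add hF'.upperSemicontinuousOn

lemma le_of_tendsto_penalized_le (hρ : 0 < ρ) [l.NeBot] (hl : Tendsto id l (𝓝 0))
    {g : ℝ → ℝ} {M : ℝ} (hg : Tendsto g l (𝓝 M)) (hz : Tendsto z l (𝓝 z₀))
    (hle : ∀ᶠ ε in l, g ε ≤ w₁ (z ε).fst (z ε).snd + -w₂ (z' ε).fst (z' ε).snd -
      quadraticAt z₀ π (timeSpaceScaling d a b) (z ε))
    (hest : ∀ᶠ ε in l, ρ * (w₁ (z ε).fst (z ε).snd - w₂ (z' ε).fst (z' ε).snd) -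
      (π + timeSpaceScaling d a b (z ε - z₀)).fst ≤
      α * ((C * ε + κ) + (1 + ‖(z ε).snd‖) * ‖(π + timeSpaceScaling d a b (z ε - z₀)).snd‖ +
        (1 + ‖(z ε).snd‖ ^ 2) * b)) :
    ρ * M - π.fst ≤ α * (κ + (1 + ‖z₀.snd‖) * ‖π.snd‖ + (1 + ‖z₀.snd‖ ^ 2) * b) := by
  have hfst := (WithLp.fstL 2 ℝ ℝ (EuclideanSpace ℝ (Fin d))).continuous
  have hsnd := (WithLp.sndL 2 ℝ ℝ (EuclideanSpace ℝ (Fin d))).continuous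
  have hF : Tendsto (fun ε => quadraticAt z₀ π (timeSpaceScaling d a b) (z ε)) l (𝓝 0) := by
    have hzero : quadraticAt z₀ π (timeSpaceScaling d a b) z₀ = 0 := by simp [quadraticAt]
    exact hzero ▸ ((continuous_quadraticAt z₀ π (timeSpaceScaling d a b)).tendsto z₀).comp hz
  have hgrad : Tendsto (fun ε => π + timeSpaceScaling d a b (z ε - z₀)) l (𝓝 π) := by
    simpa using ((timeSpaceScaling d a b).continuous.tendsto 0).comp
      (tendsto_sub_nhds_zero_iff.mpr hz) |>.const_add π
  have hz_snd := ((hsnd.tendsto z₀).comp hz).norm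
  have hleft := ((hg.add hF).const_mul ρ).sub ((hfst.tendsto π).comp hgrad)
  have hright := ((((hl.const_mul C).add_const κ).add ((hz_snd.const_add 1).mul
    ((hsnd.tendsto π).comp hgrad).norm)).add (((hz_snd.pow 2).const_add 1).mul_const b)).const_mul α
  have hlim := le_of_tendsto_of_tendsto hleft hright <| by
    filter_upwards [hle, hest] with ε hg_le hε
    refine le_trans (sub_le_sub_right ?_ _) hε
    gcongr
    linarith
  simpa using hlim

lemma AssumptionA1With.eventually_le_of_penalized_max (hA : AssumptionA1With d 𝒪 H α)
    (hα : 0 < α) (h𝒪 : IsOpen 𝒪)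
    (hH : Continuous fun z : EuclideanSpace ℝ (Fin d) × EuclideanSpace ℝ (Fin d) ×
      Matrix (Fin d) (Fin d) ℝ => H z.1 z.2.1 z.2.2)
    (hsub : IsViscositySubsolution T ρ H (closure 𝒪) w₁)
    (hsuper : IsViscositySupersolution T ρ H 𝒪 w₂)
    (hw₁ : UpperSemicontinuousOn (fun z : ℝ × EuclideanSpace ℝ (Fin d) => w₁ z.1 z.2)
      (Icc 0 T ×ˢ closure 𝒪))
    (hw₂ : LowerSemicontinuousOn (fun z : ℝ × EuclideanSpace ℝ (Fin d) => w₂ z.1 z.2)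
      (Icc 0 T ×ˢ closure 𝒪)) (hC : 0 ≤ C) (he : IsInwardPerturbation C 𝒪 w z₀ l e)
    (hκ : 0 < κ) (hr : 0 < r) (hb : 0 ≤ b) (hz₀T : z₀.fst < T)
    (hz : ∀ ε, z ε ∈ cylinder T (closure 𝒪) ∩ Metric.closedBall z₀ r)
    (hz' : ∀ ε, z' ε ∈ cylinder T (closure 𝒪) ∩ Metric.closedBall z₀ r)
    (hmax : ∀ ε, ∀ ζ ∈ cylinder T (closure 𝒪) ∩ Metric.closedBall z₀ r,
      ∀ ζ' ∈ cylinder T (closure 𝒪) ∩ Metric.closedBall z₀ r,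
      w₁ ζ.fst ζ.snd + -w₂ ζ'.fst ζ'.snd - quadraticAt z₀ π (timeSpaceScaling d a b) ζ -
        κ / ε ^ 2 / 2 * ‖ζ - ζ' + e ε‖ ^ 2 ≤
      w₁ (z ε).fst (z ε).snd + -w₂ (z' ε).fst (z' ε).snd -
        quadraticAt z₀ π (timeSpaceScaling d a b) (z ε) -
        κ / ε ^ 2 / 2 * ‖z ε - z' ε + e ε‖ ^ 2)
    (hzz₀ : Tendsto z l (𝓝 z₀)) (hz'z₀ : Tendsto z' l (𝓝 z₀))
    (hdiff : (fun ε => z ε - z' ε + e ε) =o[l] id) :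
    ∀ᶠ ε in l, ρ * (w₁ (z ε).fst (z ε).snd - w₂ (z' ε).fst (z' ε).snd) -
      (π + timeSpaceScaling d a b (z ε - z₀)).fst ≤
      α * (((C + 1) * ε + κ * ((C + 1) + (C + 1) ^ 2)) +
        (1 + ‖(z ε).snd‖) * ‖(π + timeSpaceScaling d a b (z ε - z₀)).snd‖ +
        (1 + ‖(z ε).snd‖ ^ 2) * b) := by
  have hK : IsCompact (cylinder T (closure 𝒪) ∩ Metric.closedBall z₀ r) :=
    (isCompact_closedBall z₀ r).inter_left (isClosed_cylinder isClosed_closure)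
  have hnear : ∀ᶠ ζ in 𝓝 z₀, ζ ∈ Metric.ball z₀ r ∧ ζ.fst < T :=
    (Metric.isOpen_ball.eventually_mem (Metric.mem_ball_self hr)).and <|
      ((WithLp.fstL 2 ℝ ℝ (EuclideanSpace ℝ (Fin d))).continuous.tendsto z₀).eventually
        (gt_mem_nhds hz₀T)
  have hsnd : Tendsto (fun ε => ‖(z ε).snd - (z' ε).snd‖) l (𝓝 0) := by
    have hlim := (((WithLp.sndL 2 ℝ ℝ (EuclideanSpace ℝ (Fin d))).continuous.tendsto 0).comp
      (sub_self z₀ ▸ hzz₀.sub hz'z₀)).norm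
    rwa [map_zero, norm_zero] at hlim
  filter_upwards [hzz₀.eventually hnear, hz'z₀.eventually hnear, hsnd.eventually_le_const one_pos,
    he.eventually_snd_mem (fun ε => (hz ε).1) hzz₀ hdiff, he.le_nhdsGT eventually_mem_nhdsWithin,
    he.tendsto_id.eventually_le_const (Real.sqrt_pos.mpr hκ), he.norm_snd_le,
    hdiff.bound one_pos] with ε ⟨hball, hT⟩ ⟨hball', hT'⟩ hzz' hz'𝒪 (hε : 0 < ε) hεκ heε hdiffε
  have hn : (√κ / ε) ^ 2 = κ / ε ^ 2 := by rw [div_pow, Real.sq_sqrt hκ.le]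
  have hdiffε' : ‖(z ε).snd - (z' ε).snd + (e ε).snd‖ ≤ ε := by
    rw [id, one_mul, Real.norm_of_nonneg hε.le] at hdiffε
    exact (SpaceTime.norm_snd_le (z ε - z' ε + e ε)).trans hdiffε
  have hmaxε := hmax ε
  rw [← hn] at hmaxε
  refine (hA.le_of_penalized_max hα h𝒪 hH hsub hsuper hK
    (upperSemicontinuousOn_of_subset_cylinder hw₁ inter_subset_left)
    (upperSemicontinuousOn_of_subset_cylinder (w := fun t x => -w₂ t x) hw₂.neg inter_subset_left)
    ((one_le_div hε).mpr hεκ) hb (hz ε) (hz' ε) hmaxε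
    (inter_closedBall_eventuallyEq _ hball) (inter_closedBall_eventuallyEq _ hball')
    hT hT' hz'𝒪 hzz').trans ?_
  rw [hn]
  gcongr
  exact penalized_gap_le hC hκ hε hdiffε' heε

lemma AssumptionA1With.le_of_isInwardPerturbation (hA : AssumptionA1With d 𝒪 H α) (hα : 0 < α)
    (hρ : 0 < ρ) (h𝒪 : IsOpen 𝒪)
    (hH : Continuous fun z : EuclideanSpace ℝ (Fin d) × EuclideanSpace ℝ (Fin d) ×
      Matrix (Fin d) (Fin d) ℝ => H z.1 z.2.1 z.2.2)
    (hsub : IsViscositySubsolution T ρ H (closure 𝒪) w₁)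
    (hsuper : IsViscositySupersolution T ρ H 𝒪 w₂)
    (hw₁ : UpperSemicontinuousOn (fun z : ℝ × EuclideanSpace ℝ (Fin d) => w₁ z.1 z.2)
      (Icc 0 T ×ˢ closure 𝒪))
    (hw₂ : LowerSemicontinuousOn (fun z : ℝ × EuclideanSpace ℝ (Fin d) => w₂ z.1 z.2)
      (Icc 0 T ×ˢ closure 𝒪))
    (hC : 0 ≤ C) [l.NeBot] (he : IsInwardPerturbation C 𝒪 w₂ z₀ l e) (hκ : 0 < κ) (hr : 0 < r)
    (hb : 0 ≤ b) (hz₀ : z₀ ∈ cylinder T (closure 𝒪)) (hz₀T : z₀.fst < T)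
    (hmax : ∀ ζ ∈ cylinder T (closure 𝒪) ∩ Metric.closedBall z₀ r, ζ ≠ z₀ →
      w₁ ζ.fst ζ.snd - w₂ ζ.fst ζ.snd - quadraticAt z₀ π (timeSpaceScaling d a b) ζ <
        w₁ z₀.fst z₀.snd - w₂ z₀.fst z₀.snd) :
    ρ * (w₁ z₀.fst z₀.snd - w₂ z₀.fst z₀.snd) - π.fst ≤
      α * (κ * ((C + 1) + (C + 1) ^ 2) + (1 + ‖z₀.snd‖) * ‖π.snd‖ + (1 + ‖z₀.snd‖ ^ 2) * b) := by
  have hK : IsCompact (cylinder T (closure 𝒪) ∩ Metric.closedBall z₀ r) :=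
    (isCompact_closedBall z₀ r).inter_left (isClosed_cylinder isClosed_closure)
  have hF₀ : quadraticAt z₀ π (timeSpaceScaling d a b) z₀ = 0 := by simp [quadraticAt]
  have hadd : Tendsto (fun ε => z₀ + e ε) l (𝓝 z₀) := by simpa using he.tendsto_zero.const_add z₀
  have hg : Tendsto (fun ε => w₁ z₀.fst z₀.snd + -w₂ (z₀ + e ε).fst (z₀ + e ε).snd -
      quadraticAt z₀ π (timeSpaceScaling d a b) z₀) l
      (𝓝 (w₁ z₀.fst z₀.snd + -w₂ z₀.fst z₀.snd - quadraticAt z₀ π (timeSpaceScaling d a b) z₀)) :=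
    (he.tendsto_apply.neg.const_add _).sub_const _
  obtain ⟨z, z', hz, hz', hle, hzz₀, hz'z₀, hdiff, hgle⟩ := exists_penalized_max_family hK
    (upperSemicontinuousOn_doubled inter_subset_left hw₁ hw₂
      (continuous_quadraticAt z₀ π (timeSpaceScaling d a b)))
    ⟨hz₀, Metric.mem_closedBall_self hr.le⟩ (by simpa [hF₀, ← sub_eq_add_neg] using hmax)
    he.le_nhdsGT he.tendsto_zero ((he.eventually_add_mem_cylinder hz₀ hz₀T).and
      (hadd.eventually (Metric.closedBall_mem_nhds z₀ hr))) hg hκ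
  simp only [hF₀, sub_zero] at hg hgle
  rw [← sub_eq_add_neg] at hg
  exact le_of_tendsto_penalized_le hρ he.tendsto_id hg hzz₀ hgle
    (hA.eventually_le_of_penalized_max hα h𝒪 hH hsub hsuper hw₁ hw₂ hC he hκ hr hb hz₀T hz hz' hle
      hzz₀ hz'z₀ hdiff)

lemma AssumptionA1With.le_of_isStrictLocalMax (hA : AssumptionA1With d 𝒪 H α) (hα : 0 < α)
    (hρ : 0 < ρ) (h𝒪 : IsOpen 𝒪)
    (hH : Continuous fun z : EuclideanSpace ℝ (Fin d) × EuclideanSpace ℝ (Fin d) ×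
      Matrix (Fin d) (Fin d) ℝ => H z.1 z.2.1 z.2.2)
    (hsub : IsViscositySubsolution T ρ H (closure 𝒪) w₁)
    (hsuper : IsViscositySupersolution T ρ H 𝒪 w₂)
    (hw₁ : UpperSemicontinuousOn (fun z : ℝ × EuclideanSpace ℝ (Fin d) => w₁ z.1 z.2)
      (Icc 0 T ×ˢ closure 𝒪))
    (hw₂ : LowerSemicontinuousOn (fun z : ℝ × EuclideanSpace ℝ (Fin d) => w₂ z.1 z.2)
      (Icc 0 T ×ˢ closure 𝒪)) (hR : ClassR d T 𝒪 w₂) (hr : 0 < r) (hb : 0 ≤ b)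
    (hz₀ : z₀ ∈ cylinder T (closure 𝒪)) (hz₀T : z₀.fst < T)
    (hmax : ∀ ζ ∈ cylinder T (closure 𝒪) ∩ Metric.closedBall z₀ r, ζ ≠ z₀ →
      w₁ ζ.fst ζ.snd - w₂ ζ.fst ζ.snd - quadraticAt z₀ π (timeSpaceScaling d a b) ζ <
        w₁ z₀.fst z₀.snd - w₂ z₀.fst z₀.snd) :
    ρ * (w₁ z₀.fst z₀.snd - w₂ z₀.fst z₀.snd) - π.fst ≤
      α * ((1 + ‖z₀.snd‖) * ‖π.snd‖ + (1 + ‖z₀.snd‖ ^ 2) * b) := by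
  obtain ⟨C, l, e, hC, _, he⟩ := hR.exists_isInwardPerturbation h𝒪 hz₀ hz₀T
  have hlim : Tendsto (fun κ : ℝ => α * (κ * ((C + 1) + (C + 1) ^ 2) +
      (1 + ‖z₀.snd‖) * ‖π.snd‖ + (1 + ‖z₀.snd‖ ^ 2) * b)) (𝓝[>] 0)
      (𝓝 (α * (0 * ((C + 1) + (C + 1) ^ 2) + (1 + ‖z₀.snd‖) * ‖π.snd‖ +
        (1 + ‖z₀.snd‖ ^ 2) * b))) :=
    (Continuous.tendsto (by fun_prop) 0).mono_left nhdsWithin_le_nhds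
  rw [zero_mul, zero_add] at hlim
  refine ge_of_tendsto hlim ?_
  filter_upwards [self_mem_nhdsWithin] with κ hκ
  exact hA.le_of_isInwardPerturbation hα hρ h𝒪 hH hsub hsuper hw₁ hw₂ hC he hκ hr hb hz₀ hz₀T hmax

end LocalEstimate

section Barrier

variable {E : Type*} [NormedAddCommGroup E] {T δ Λ τ : ℝ} {k m : ℕ}

/-- The penalization `δ e^{Λ(T - t)} (1 + ‖x‖²)^k`, which dominates polynomials of degree less than
`2k` at infinity and is a strict supersolution for `Λ` large. -/
def barrier (T δ Λ : ℝ) (k : ℕ) (t : ℝ) (x : E) : ℝ :=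
  δ * Real.exp (Λ * (T - t)) * (1 + ‖x‖ ^ 2) ^ k

lemma barrier_pos (hδ : 0 < δ) (t : ℝ) (x : E) : 0 < barrier T δ Λ k t x := by
  unfold barrier
  positivity

lemma continuous_barrier : Continuous fun z : ℝ × E => barrier T δ Λ k z.1 z.2 := by
  unfold barrier
  fun_prop

lemma tendsto_barrier_zero (t : ℝ) (x : E) :
    Tendsto (fun δ => barrier T δ Λ k t x) (𝓝[>] 0) (𝓝 0) := by
  have hlim : Tendsto (fun δ : ℝ => δ * (Real.exp (Λ * (T - t)) * (1 + ‖x‖ ^ 2) ^ k)) (𝓝[>] 0)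
      (𝓝 (0 * (Real.exp (Λ * (T - t)) * (1 + ‖x‖ ^ 2) ^ k))) :=
    (tendsto_id.mono_left nhdsWithin_le_nhds).mul_const _
  simpa only [barrier, mul_assoc, zero_mul] using hlim

lemma norm_le_of_barrier_lt {t M : ℝ} {x : E} (hδ : 0 < δ) (hΛ : 0 ≤ Λ) (ht : t ≤ T)
    (hlt : barrier T δ Λ (m + 1) t x < M * (1 + ‖x‖ ^ 2) ^ m) : ‖x‖ ≤ M / δ := by
  have hexp : 1 ≤ Real.exp (Λ * (T - t)) := Real.one_le_exp (mul_nonneg hΛ (sub_nonneg.mpr ht))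
  have hlt' : δ * (1 + ‖x‖ ^ 2) < M := by
    rw [barrier, pow_succ', ← mul_assoc] at hlt
    refine lt_of_le_of_lt ?_ (lt_of_mul_lt_mul_right hlt (by positivity))
    gcongr
    exact le_mul_of_one_le_right hδ.le hexp
  rw [le_div_iff₀ hδ, mul_comm]
  refine le_trans ?_ hlt'.le
  gcongr
  nlinarith [sq_nonneg (‖x‖ - 1)]

variable [InnerProductSpace ℝ E]

lemma sq_two_inner_add_div_le (x : E) {h : E} (hh : ‖h‖ ≤ 1) :
    ((2 * ⟪x, h⟫_ℝ + ‖h‖ ^ 2) / (1 + ‖x‖ ^ 2)) ^ 2 ≤ 5 * ‖h‖ ^ 2 / (1 + ‖x‖ ^ 2) := by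
  have habs : |2 * ⟪x, h⟫_ℝ + ‖h‖ ^ 2| ≤ (2 * ‖x‖ + 1) * ‖h‖ :=
    calc |2 * ⟪x, h⟫_ℝ + ‖h‖ ^ 2| ≤ 2 * |⟪x, h⟫_ℝ| + ‖h‖ ^ 2 := by
          refine (abs_add_le _ _).trans_eq ?_
          rw [abs_mul, abs_two, abs_of_nonneg (sq_nonneg ‖h‖)]
      _ ≤ 2 * (‖x‖ * ‖h‖) + 1 * ‖h‖ := by
          rw [sq]
          gcongr
          exact abs_real_inner_le_norm x h
      _ = (2 * ‖x‖ + 1) * ‖h‖ := by ring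
  have hfive : (2 * ‖x‖ + 1) ^ 2 ≤ 5 * (1 + ‖x‖ ^ 2) := by nlinarith [sq_nonneg (‖x‖ - 2)]
  rw [div_pow, div_le_div_iff₀ (by positivity) (by positivity)]
  calc (2 * ⟪x, h⟫_ℝ + ‖h‖ ^ 2) ^ 2 * (1 + ‖x‖ ^ 2)
      ≤ ((2 * ‖x‖ + 1) * ‖h‖) ^ 2 * (1 + ‖x‖ ^ 2) := by
        rw [← sq_abs (2 * ⟪x, h⟫_ℝ + ‖h‖ ^ 2)]
        gcongr
    _ = (2 * ‖x‖ + 1) ^ 2 * (‖h‖ ^ 2 * (1 + ‖x‖ ^ 2)) := by ring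
    _ ≤ 5 * (1 + ‖x‖ ^ 2) * (‖h‖ ^ 2 * (1 + ‖x‖ ^ 2)) := by gcongr
    _ = 5 * ‖h‖ ^ 2 * (1 + ‖x‖ ^ 2) ^ 2 := by ring

lemma one_add_norm_add_sq_pow_le (x h : E) (k : ℕ) :
    (1 + ‖x + h‖ ^ 2) ^ k ≤ (1 + ‖x‖ ^ 2) ^ k *
      Real.exp (k * ((2 * ⟪x, h⟫_ℝ + ‖h‖ ^ 2) / (1 + ‖x‖ ^ 2))) := by
  have hratio : (1 + ‖x + h‖ ^ 2) / (1 + ‖x‖ ^ 2) =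
      (2 * ⟪x, h⟫_ℝ + ‖h‖ ^ 2) / (1 + ‖x‖ ^ 2) + 1 := by
    rw [norm_add_sq_real]
    field_simp
    ring
  rw [← div_le_iff₀' (by positivity), ← div_pow, Real.exp_nat_mul, hratio]
  gcongr
  · exact hratio ▸ by positivity
  · exact Real.add_one_le_exp _

lemma sq_add_le_of_le_inv {Λ τ ν q : ℝ} (hΛ : 0 ≤ Λ) (hq : 0 ≤ q)
    (hτ : |τ| ≤ 1 / (1 + 4 * q + 2 * Λ)) (hν : |ν| ≤ 1 / (1 + 4 * q + 2 * Λ)) :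
    10 * q ^ 2 * ν ^ 2 + 2 * Λ ^ 2 * τ ^ 2 ≤ 1 := by
  have hsq {σ : ℝ} (hσ : |σ| ≤ 1 / (1 + 4 * q + 2 * Λ)) : σ ^ 2 ≤ (1 / (1 + 4 * q + 2 * Λ)) ^ 2 :=
    sq_le_sq' (abs_le.mp hσ).1 (abs_le.mp hσ).2
  calc 10 * q ^ 2 * ν ^ 2 + 2 * Λ ^ 2 * τ ^ 2
      ≤ 10 * q ^ 2 * (1 / (1 + 4 * q + 2 * Λ)) ^ 2 +
        2 * Λ ^ 2 * (1 / (1 + 4 * q + 2 * Λ)) ^ 2 := by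
        gcongr ?_ * ?_ + ?_ * ?_
        exacts [hsq hν, hsq hτ]
    _ = (10 * q ^ 2 + 2 * Λ ^ 2) / (1 + 4 * q + 2 * Λ) ^ 2 := by rw [div_pow, one_pow]; ring
    _ ≤ 1 := by
        rw [div_le_one (by positivity)]
        nlinarith only [hq, hΛ, mul_nonneg hq hΛ, sq_nonneg Λ, sq_nonneg q]

lemma exp_mul_one_add_norm_add_sq_pow_le (hΛ : 0 ≤ Λ) (x : E) {h : E}
    (hτ : |τ| ≤ 1 / (1 + 4 * k + 2 * Λ)) (hh : ‖h‖ ≤ 1 / (1 + 4 * k + 2 * Λ)) :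
    Real.exp (-(Λ * τ)) * (1 + ‖x + h‖ ^ 2) ^ k ≤ (1 + ‖x‖ ^ 2) ^ k *
      (1 - Λ * τ + 2 * k * ⟪x, h⟫_ℝ / (1 + ‖x‖ ^ 2) +
        (k + 10 * k ^ 2) * ‖h‖ ^ 2 / (1 + ‖x‖ ^ 2) + 2 * Λ ^ 2 * τ ^ 2) := by
  set b : ℝ := 1 + ‖x‖ ^ 2
  set θ : ℝ := (2 * ⟪x, h⟫_ℝ + ‖h‖ ^ 2) / b with hθ
  have hb1 : 1 ≤ b := le_add_of_nonneg_right (sq_nonneg _)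
  have hh1 : ‖h‖ ≤ 1 := hh.trans (div_le_one_of_le₀ (by linarith only [hΛ, k.cast_nonneg (α := ℝ)])
    (by positivity))
  have hsq : (k * θ - Λ * τ) ^ 2 ≤ 10 * k ^ 2 * ‖h‖ ^ 2 / b + 2 * Λ ^ 2 * τ ^ 2 :=
    calc (k * θ - Λ * τ) ^ 2 ≤ 2 * k ^ 2 * θ ^ 2 + 2 * Λ ^ 2 * τ ^ 2 := by
          nlinarith only [sq_nonneg (k * θ + Λ * τ)]
      _ ≤ 2 * k ^ 2 * (5 * ‖h‖ ^ 2 / b) + 2 * Λ ^ 2 * τ ^ 2 := by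
          gcongr
          exact sq_two_inner_add_div_le x hh1
      _ = 10 * k ^ 2 * ‖h‖ ^ 2 / b + 2 * Λ ^ 2 * τ ^ 2 := by ring
  have hle1 : |k * θ - Λ * τ| ≤ 1 := by
    refine sq_le_one_iff_abs_le_one _ |>.mp <| hsq.trans <| le_trans ?_ <|
      sq_add_le_of_le_inv hΛ k.cast_nonneg hτ ((abs_norm h).trans_le hh)
    gcongr
    exact div_le_self (by positivity) hb1
  have hexp : Real.exp (k * θ - Λ * τ) ≤ 1 + (k * θ - Λ * τ) + (k * θ - Λ * τ) ^ 2 := by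
    linarith only [(abs_le.mp (Real.abs_exp_sub_one_sub_id_le hle1)).2]
  calc Real.exp (-(Λ * τ)) * (1 + ‖x + h‖ ^ 2) ^ k
      ≤ Real.exp (-(Λ * τ)) * (b ^ k * Real.exp (k * θ)) := by
        gcongr
        exact one_add_norm_add_sq_pow_le x h k
    _ = b ^ k * Real.exp (k * θ - Λ * τ) := by rw [sub_eq_add_neg, Real.exp_add]; ring
    _ ≤ b ^ k * (1 + (k * θ - Λ * τ) +
        (10 * k ^ 2 * ‖h‖ ^ 2 / b + 2 * Λ ^ 2 * τ ^ 2)) := by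
        gcongr
        exact hexp.trans (add_le_add_right hsq _)
    _ = _ := by rw [hθ]; ring

lemma barrier_le_add {t s : ℝ} (hδ : 0 < δ) (hΛ : 0 ≤ Λ) (x : E) {h : E}
    (hτ : |s| ≤ 1 / (1 + 4 * k + 2 * Λ)) (hh : ‖h‖ ≤ 1 / (1 + 4 * k + 2 * Λ)) :
    barrier T δ Λ k (t + s) (x + h) ≤ barrier T δ Λ k t x *
      (1 - Λ * s + 2 * k * ⟪x, h⟫_ℝ / (1 + ‖x‖ ^ 2) +
        (k + 10 * k ^ 2) * ‖h‖ ^ 2 / (1 + ‖x‖ ^ 2) + 2 * Λ ^ 2 * s ^ 2) := by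
  have hexp : Real.exp (Λ * (T - (t + s))) = Real.exp (Λ * (T - t)) * Real.exp (-(Λ * s)) := by
    rw [← Real.exp_add]
    ring_nf
  have hle := mul_le_mul_of_nonneg_left (exp_mul_one_add_norm_add_sq_pow_le hΛ x hτ hh)
    (by positivity : 0 ≤ δ * Real.exp (Λ * (T - t)))
  rw [barrier, barrier, hexp]
  simpa only [mul_assoc] using hle

lemma barrier_gradient_bound {β : ℝ} (hβ : 0 ≤ β) (k : ℕ) (x : E) (c : ℝ) :
    (1 + ‖x‖) * ‖(2 * k * β / (1 + ‖x‖ ^ 2)) • x‖ + (1 + ‖x‖ ^ 2) * (c * β / (1 + ‖x‖ ^ 2)) ≤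
      (4 * k + c) * β := by
  have hx : (1 + ‖x‖) * ‖x‖ ≤ 2 * (1 + ‖x‖ ^ 2) := by nlinarith [sq_nonneg (‖x‖ - 1)]
  rw [norm_smul, Real.norm_of_nonneg (by positivity), mul_div_cancel₀ _ (by positivity)]
  calc (1 + ‖x‖) * (2 * k * β / (1 + ‖x‖ ^ 2) * ‖x‖) + c * β
      = 2 * k * β / (1 + ‖x‖ ^ 2) * ((1 + ‖x‖) * ‖x‖) + c * β := by ring
    _ ≤ 2 * k * β / (1 + ‖x‖ ^ 2) * (2 * (1 + ‖x‖ ^ 2)) + c * β := by gcongr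
    _ = (4 * k + c) * β := by field_simp; ring

end Barrier

section Comparison

variable {d : ℕ} {𝒪 : Set (EuclideanSpace ℝ (Fin d))} {T ρ α δ Λ M : ℝ} {k m : ℕ}
  {H : EuclideanSpace ℝ (Fin d) → EuclideanSpace ℝ (Fin d) → Matrix (Fin d) (Fin d) ℝ → ℝ}
  {w₁ w₂ : ℝ → EuclideanSpace ℝ (Fin d) → ℝ}

lemma inner_toLp (t : ℝ) (x : EuclideanSpace ℝ (Fin d)) (v : SpaceTime d) :
    ⟪(WithLp.toLp 2 (t, x) : SpaceTime d), v⟫_ℝ = t * v.fst + ⟪x, v.snd⟫_ℝ := by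
  rw [mul_comm]
  rfl

lemma inner_timeSpaceScaling_self (a b : ℝ) (v : SpaceTime d) :
    ⟪timeSpaceScaling d a b v, v⟫_ℝ = a * v.fst ^ 2 + b * ‖v.snd‖ ^ 2 := by
  rw [timeSpaceScaling_apply, inner_toLp, real_inner_smul_left, real_inner_self_eq_norm_sq]
  ring

lemma barrier_lt_add_quadraticAt (hδ : 0 < δ) (hΛ : 0 ≤ Λ) {z₀ ζ : SpaceTime d} (hne : ζ ≠ z₀)
    (hζ : ‖ζ - z₀‖ ≤ 1 / (1 + 4 * k + 2 * Λ)) :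
    barrier T δ Λ k ζ.fst ζ.snd < barrier T δ Λ k z₀.fst z₀.snd +
      quadraticAt z₀ (WithLp.toLp 2 (-(Λ * barrier T δ Λ k z₀.fst z₀.snd),
          (2 * k * barrier T δ Λ k z₀.fst z₀.snd / (1 + ‖z₀.snd‖ ^ 2)) • z₀.snd))
        (timeSpaceScaling d ((4 * Λ ^ 2 + 2) * barrier T δ Λ k z₀.fst z₀.snd)
          ((2 * (k + 10 * k ^ 2) + 2) * barrier T δ Λ k z₀.fst z₀.snd / (1 + ‖z₀.snd‖ ^ 2))) ζ := by
  set β := barrier T δ Λ k z₀.fst z₀.snd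
  have hβ : 0 < β := barrier_pos hδ _ _
  obtain ⟨v, rfl⟩ : ∃ v, z₀ + v = ζ := ⟨ζ - z₀, add_sub_cancel _ _⟩
  rw [add_sub_cancel_left] at hζ
  have hv : 0 < v.fst ^ 2 + ‖v.snd‖ ^ 2 / (1 + ‖z₀.snd‖ ^ 2) := by
    have hsum : 0 < v.fst ^ 2 + ‖v.snd‖ ^ 2 := by
      have hnorm : 0 < ‖v‖ ^ 2 := pow_pos (norm_pos_iff.mpr (by simpa using hne)) 2
      rwa [WithLp.prod_norm_sq_eq_of_L2, Real.norm_eq_abs, sq_abs] at hnorm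
    refine (div_pos hsum (by positivity : 0 < 1 + ‖z₀.snd‖ ^ 2)).trans_le ?_
    rw [add_div]
    gcongr
    exact div_le_self (sq_nonneg _) (le_add_of_nonneg_right (sq_nonneg _))
  calc barrier T δ Λ k (z₀ + v).fst (z₀ + v).snd
      ≤ β * (1 - Λ * v.fst + 2 * k * ⟪z₀.snd, v.snd⟫_ℝ / (1 + ‖z₀.snd‖ ^ 2) +
        (k + 10 * k ^ 2) * ‖v.snd‖ ^ 2 / (1 + ‖z₀.snd‖ ^ 2) + 2 * Λ ^ 2 * v.fst ^ 2) :=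
        barrier_le_add hδ hΛ z₀.snd ((SpaceTime.norm_fst_le v).trans hζ)
          ((SpaceTime.norm_snd_le v).trans hζ)
    _ < β * (1 - Λ * v.fst + 2 * k * ⟪z₀.snd, v.snd⟫_ℝ / (1 + ‖z₀.snd‖ ^ 2) +
        (k + 10 * k ^ 2) * ‖v.snd‖ ^ 2 / (1 + ‖z₀.snd‖ ^ 2) + 2 * Λ ^ 2 * v.fst ^ 2) +
        β * (v.fst ^ 2 + ‖v.snd‖ ^ 2 / (1 + ‖z₀.snd‖ ^ 2)) :=
        lt_add_of_pos_right _ (mul_pos hβ hv)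
    _ = _ := by
        rw [quadraticAt, add_sub_cancel_left, inner_toLp, inner_timeSpaceScaling_self,
          real_inner_smul_left]
        ring

/-- The growth rate `Λ` in time at which `barrier` absorbs the right-hand side of Assumption A.1
with constant `α`. -/
def barrierRate (α : ℝ) (k : ℕ) : ℝ := α * (4 * k + (2 * (k + 10 * k ^ 2) + 2))

lemma exists_isMaxOn_of_pos_mem {X : Type*} [TopologicalSpace X] {f : X → ℝ} {s K : Set X}
    (hK : IsCompact K) (hKs : K ⊆ s) (hf : UpperSemicontinuousOn f K)
    (hpos : ∀ x ∈ s, 0 < f x → x ∈ K) {x₀ : X} (hx₀ : x₀ ∈ s) (hfx₀ : 0 < f x₀) :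
    ∃ x ∈ s, 0 < f x ∧ IsMaxOn f s x := by
  obtain ⟨x, hx, hmax⟩ := hf.exists_isMaxOn ⟨x₀, hpos x₀ hx₀ hfx₀⟩ hK
  have hfx : 0 < f x := hfx₀.trans_le (hmax (hpos x₀ hx₀ hfx₀))
  refine ⟨x, hKs hx, hfx, fun y hy => ?_⟩
  rcases le_or_gt (f y) 0 with hfy | hfy
  · exact hfy.trans hfx.le
  · exact hmax (hpos y hy hfy)

lemma isCompact_cylinder {S : Set (EuclideanSpace ℝ (Fin d))} (hS : IsCompact S) :
    IsCompact (cylinder T S) := by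
  refine ((isCompact_Icc.prod hS).image (WithLp.prod_continuous_toLp 2 ℝ _)).of_isClosed_subset
    (isClosed_cylinder hS.isClosed) fun z hz => ⟨(z.fst, z.snd), hz, rfl⟩

lemma exists_isMaxOn_sub_barrier (hδ : 0 < δ) (hΛ : 0 ≤ Λ)
    (hw₁ : UpperSemicontinuousOn (fun z : ℝ × EuclideanSpace ℝ (Fin d) => w₁ z.1 z.2)
      (Icc 0 T ×ˢ closure 𝒪))
    (hw₂ : LowerSemicontinuousOn (fun z : ℝ × EuclideanSpace ℝ (Fin d) => w₂ z.1 z.2)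
      (Icc 0 T ×ˢ closure 𝒪))
    (hM : ∀ t ∈ Icc 0 T, ∀ x ∈ closure 𝒪, w₁ t x - w₂ t x ≤ M * (1 + ‖x‖ ^ 2) ^ m)
    {ζ : SpaceTime d} (hζ : ζ ∈ cylinder T (closure 𝒪))
    (hpos : barrier T δ Λ (m + 1) ζ.fst ζ.snd < w₁ ζ.fst ζ.snd - w₂ ζ.fst ζ.snd) :
    ∃ z ∈ cylinder T (closure 𝒪), 0 < w₁ z.fst z.snd - w₂ z.fst z.snd -
        barrier T δ Λ (m + 1) z.fst z.snd ∧
      IsMaxOn (fun z : SpaceTime d => w₁ z.fst z.snd - w₂ z.fst z.snd -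
        barrier T δ Λ (m + 1) z.fst z.snd) (cylinder T (closure 𝒪)) z := by
  have hK : IsCompact (cylinder T (closure 𝒪 ∩ Metric.closedBall 0 (M / δ))) :=
    isCompact_cylinder ((isCompact_closedBall _ _).inter_left isClosed_closure)
  have hKs : cylinder T (closure 𝒪 ∩ Metric.closedBall 0 (M / δ)) ⊆ cylinder T (closure 𝒪) :=
    fun z hz => ⟨hz.1, hz.2.1⟩
  refine exists_isMaxOn_of_pos_mem hK hKs ?_ (fun z hz hz_pos => ⟨hz.1, hz.2, ?_⟩) hζ
    (sub_pos.mpr hpos)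
  · simp only [sub_eq_add_neg]
    exact upperSemicontinuousOn_of_subset_cylinder
      (w := fun t x => w₁ t x + -w₂ t x + -barrier T δ Λ (m + 1) t x)
      ((hw₁.add hw₂.neg).add continuous_barrier.neg.continuousOn.upperSemicontinuousOn) hKs
  · exact mem_closedBall_zero_iff.mpr
      (norm_le_of_barrier_lt hδ hΛ hz.1.2 ((sub_pos.mp hz_pos).trans_le (hM _ hz.1 _ hz.2)))

lemma AssumptionA1With.sub_le_barrier (hA : AssumptionA1With d 𝒪 H α) (hα : 0 < α) (hρ : 0 < ρ)
    (h𝒪 : IsOpen 𝒪)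
    (hH : Continuous fun z : EuclideanSpace ℝ (Fin d) × EuclideanSpace ℝ (Fin d) ×
      Matrix (Fin d) (Fin d) ℝ => H z.1 z.2.1 z.2.2)
    (hsub : IsViscositySubsolution T ρ H (closure 𝒪) w₁)
    (hsuper : IsViscositySupersolution T ρ H 𝒪 w₂)
    (hw₁ : UpperSemicontinuousOn (fun z : ℝ × EuclideanSpace ℝ (Fin d) => w₁ z.1 z.2)
      (Icc 0 T ×ˢ closure 𝒪))
    (hw₂ : LowerSemicontinuousOn (fun z : ℝ × EuclideanSpace ℝ (Fin d) => w₂ z.1 z.2)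
      (Icc 0 T ×ˢ closure 𝒪)) (hR : ClassR d T 𝒪 w₂)
    (hM : ∀ t ∈ Icc 0 T, ∀ x ∈ closure 𝒪, w₁ t x - w₂ t x ≤ M * (1 + ‖x‖ ^ 2) ^ k)
    (hterm : ∀ x ∈ closure 𝒪, w₁ T x ≤ w₂ T x) (hδ : 0 < δ) {ζ : SpaceTime d}
    (hζ : ζ ∈ cylinder T (closure 𝒪)) :
    w₁ ζ.fst ζ.snd - w₂ ζ.fst ζ.snd ≤
      barrier T δ (barrierRate α (k + 1)) (k + 1) ζ.fst ζ.snd := by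
  by_contra! hpos
  set Λ := barrierRate α (k + 1) with hΛ
  have hΛ₀ : 0 ≤ Λ := by
    rw [hΛ, barrierRate]
    positivity
  obtain ⟨z, hz, hz_pos, hmax⟩ := exists_isMaxOn_sub_barrier hδ hΛ₀ hw₁ hw₂ hM hζ hpos
  have hβ : 0 < barrier T δ Λ (k + 1) z.fst z.snd := barrier_pos hδ _ _
  have hzT : z.fst < T := by
    refine hz.1.2.lt_of_ne fun h => ?_
    have := h ▸ hterm z.snd hz.2
    linarith
  have hincr (ζ' : SpaceTime d) (hζ' : ζ' ∈ cylinder T (closure 𝒪)) :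
      w₁ ζ'.fst ζ'.snd - w₂ ζ'.fst ζ'.snd - (w₁ z.fst z.snd - w₂ z.fst z.snd) ≤
        barrier T δ Λ (k + 1) ζ'.fst ζ'.snd - barrier T δ Λ (k + 1) z.fst z.snd := by
    linarith only [isMaxOn_iff.mp hmax ζ' hζ']
  have hle := hA.le_of_isStrictLocalMax hα hρ h𝒪 hH hsub hsuper hw₁ hw₂ hR
    (r := 1 / (1 + 4 * ((k + 1 : ℕ) : ℝ) + 2 * Λ)) (by positivity)
    (b := (2 * ((k + 1 : ℕ) + 10 * (k + 1 : ℕ) ^ 2) + 2) * barrier T δ Λ (k + 1) z.fst z.snd /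
      (1 + ‖z.snd‖ ^ 2)) (by positivity) hz hzT fun ζ' hζ' hne =>
    sub_lt_comm.mp <| (hincr ζ' hζ'.1).trans_lt <| sub_lt_iff_lt_add'.mpr <|
      barrier_lt_add_quadraticAt hδ hΛ₀ hne (mem_closedBall_iff_norm.mp hζ'.2)
  have hbound := mul_le_mul_of_nonneg_left (barrier_gradient_bound hβ.le (k + 1) z.snd
    (2 * ((k + 1 : ℕ) + 10 * (k + 1 : ℕ) ^ 2) + 2)) hα.le
  have hgap := mul_pos hρ (hβ.trans (sub_pos.mp hz_pos))
  rw [← mul_assoc, ← barrierRate, ← hΛ] at hbound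
  have habsurd : ρ * (w₁ z.fst z.snd - w₂ z.fst z.snd) -
      -(Λ * barrier T δ Λ (k + 1) z.fst z.snd) ≤ Λ * barrier T δ Λ (k + 1) z.fst z.snd :=
    hle.trans hbound
  linarith only [habsurd, hgap]

lemma mul_one_add_norm_pow_le {E : Type*} [NormedAddCommGroup E] (C : ℝ) {p m : ℕ} (hpm : p ≤ m)
    (x : E) : C * (1 + ‖x‖ ^ p) ≤ 2 * |C| * (1 + ‖x‖ ^ 2) ^ m := by
  have hone : 1 ≤ 1 + ‖x‖ ^ 2 := le_add_of_nonneg_right (sq_nonneg _)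
  have hpow : ‖x‖ ^ p ≤ (1 + ‖x‖ ^ 2) ^ m :=
    calc ‖x‖ ^ p ≤ (1 + ‖x‖ ^ 2) ^ p := by
          gcongr
          nlinarith [sq_nonneg (‖x‖ - 1)]
      _ ≤ (1 + ‖x‖ ^ 2) ^ m := pow_le_pow_right₀ hone hpm
  calc C * (1 + ‖x‖ ^ p) ≤ |C| * (1 + ‖x‖ ^ p) := by
        gcongr
        exact le_abs_self C
    _ ≤ |C| * ((1 + ‖x‖ ^ 2) ^ m + (1 + ‖x‖ ^ 2) ^ m) := by
        gcongr
        exact one_le_pow₀ hone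
    _ = 2 * |C| * (1 + ‖x‖ ^ 2) ^ m := by ring

lemma exists_sub_le_of_polynomial_growth {E : Type*} [NormedAddCommGroup E] {I : Set ℝ} {S : Set E}
    {w₁ w₂ : ℝ → E → ℝ}
    (hw₁ : ∃ (C : ℝ) (p : ℕ), ∀ t ∈ I, ∀ x ∈ S, |w₁ t x| ≤ C * (1 + ‖x‖ ^ p))
    (hw₂ : ∃ (C : ℝ) (p : ℕ), ∀ t ∈ I, ∀ x ∈ S, |w₂ t x| ≤ C * (1 + ‖x‖ ^ p)) :
    ∃ (M : ℝ) (m : ℕ), ∀ t ∈ I, ∀ x ∈ S, w₁ t x - w₂ t x ≤ M * (1 + ‖x‖ ^ 2) ^ m := by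
  obtain ⟨C₁, p₁, hC₁⟩ := hw₁
  obtain ⟨C₂, p₂, hC₂⟩ := hw₂
  refine ⟨2 * |C₁| + 2 * |C₂|, p₁ + p₂, fun t ht x hx => ?_⟩
  have h₁ := mul_one_add_norm_pow_le C₁ (p₁.le_add_right p₂) x
  have h₂ := mul_one_add_norm_pow_le C₂ (p₂.le_add_left p₁) x
  linarith [(abs_le.mp (hC₁ t ht x hx)).2, (abs_le.mp (hC₂ t ht x hx)).1]

end Comparison

theorem stmt16_general (d : ℕ) (𝒪 : Set (EuclideanSpace ℝ (Fin d))) (h𝒪 : IsOpen 𝒪)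
    (T : ℝ) (ρ : ℝ) (hρ : 0 < ρ)
    (H : EuclideanSpace ℝ (Fin d) → EuclideanSpace ℝ (Fin d) → Matrix (Fin d) (Fin d) ℝ → ℝ)
    (Hcont : Continuous (fun z : EuclideanSpace ℝ (Fin d) × EuclideanSpace ℝ (Fin d) ×
      Matrix (Fin d) (Fin d) ℝ => H z.1 z.2.1 z.2.2))
    (HA1 : AssumptionA1 d 𝒪 H)
    (w₁ w₂ : ℝ → EuclideanSpace ℝ (Fin d) → ℝ)
    (hw₁usc : UpperSemicontinuousOn (fun z : ℝ × EuclideanSpace ℝ (Fin d) => w₁ z.1 z.2)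
      (Icc 0 T ×ˢ closure 𝒪))
    (hw₂lsc : LowerSemicontinuousOn (fun z : ℝ × EuclideanSpace ℝ (Fin d) => w₂ z.1 z.2)
      (Icc 0 T ×ˢ closure 𝒪))
    (hsub : IsViscositySubsolution T ρ H (closure 𝒪) w₁)
    (hsuper : IsViscositySupersolution T ρ H 𝒪 w₂)
    (hw₁growth : ∃ (C : ℝ) (p : ℕ), ∀ t ∈ Icc 0 T, ∀ x ∈ closure 𝒪,
      |w₁ t x| ≤ C * (1 + ‖x‖ ^ p))
    (hw₂growth : ∃ (C : ℝ) (p : ℕ), ∀ t ∈ Icc 0 T, ∀ x ∈ closure 𝒪,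
      |w₂ t x| ≤ C * (1 + ‖x‖ ^ p))
    (hw₂R : ClassR d T 𝒪 w₂) (hterm : ∀ x ∈ closure 𝒪, w₁ T x ≤ w₂ T x) :
    ∀ t ∈ Icc 0 T, ∀ x ∈ closure 𝒪, w₁ t x ≤ w₂ t x := by
  obtain ⟨α, hα, hA⟩ := HA1
  obtain ⟨M, k, hM⟩ := exists_sub_le_of_polynomial_growth hw₁growth hw₂growth
  intro t ht x hx
  refine sub_nonpos.mp (ge_of_tendsto
    (tendsto_barrier_zero (T := T) (Λ := barrierRate α (k + 1)) (k := k + 1) t x) ?_)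
  filter_upwards [self_mem_nhdsWithin] with δ hδ
  exact AssumptionA1With.sub_le_barrier hA hα hρ h𝒪 Hcont hsub hsuper hw₁usc hw₂lsc hw₂R hM hterm
    hδ (ζ := WithLp.toLp 2 (t, x)) ⟨ht, hx⟩

/-- **Theorem A.2** (comparison principle for state-constraint problems). Let `𝓗` be
continuous and nonincreasing in its third variable (Loewner order) and satisfy
Assumption A.1. If `w₁` is an u.s.c. viscosity subsolution on `cl(𝒪)` and `w₂` an l.s.c.
viscosity supersolution on `𝒪` of `ρφ − ∂_t φ + 𝓗(·,Dφ,D²φ) = 0`, both of polynomial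
growth, and `w₂` is of class `𝓡(𝒪)`, then `w₂ ≥ w₁` at time `T` implies `w₂ ≥ w₁` on
`[0,T] × cl(𝒪)`. -/
theorem stmt16 (d : ℕ) (𝒪 : Set (EuclideanSpace ℝ (Fin d))) (h𝒪 : IsOpen 𝒪)
    (T : ℝ) (hT : 0 < T) (ρ : ℝ) (hρ : 0 < ρ)
    (H : EuclideanSpace ℝ (Fin d) → EuclideanSpace ℝ (Fin d) →
      Matrix (Fin d) (Fin d) ℝ → ℝ)
    (Hcont : Continuous (fun z : EuclideanSpace ℝ (Fin d) × EuclideanSpace ℝ (Fin d) ×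
      Matrix (Fin d) (Fin d) ℝ => H z.1 z.2.1 z.2.2))
    (Hmono : ∀ x p (Q Q' : Matrix (Fin d) (Fin d) ℝ),
      (Q' - Q).PosSemidef → H x p Q' ≤ H x p Q)
    (HA1 : AssumptionA1 d 𝒪 H)
    (w₁ w₂ : ℝ → EuclideanSpace ℝ (Fin d) → ℝ)
    (hw₁usc : UpperSemicontinuousOn (fun z : ℝ × EuclideanSpace ℝ (Fin d) => w₁ z.1 z.2)
      (Icc 0 T ×ˢ closure 𝒪))
    (hw₂lsc : LowerSemicontinuousOn (fun z : ℝ × EuclideanSpace ℝ (Fin d) => w₂ z.1 z.2)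
      (Icc 0 T ×ˢ closure 𝒪))
    -- `w₁` is a viscosity subsolution on `cl(𝒪)` of `ρφ − ∂_t φ + 𝓗(·,Dφ,D²φ) = 0`
    (hsub : ∀ (φ φt : ℝ → EuclideanSpace ℝ (Fin d) → ℝ)
      (Dφ : ℝ → EuclideanSpace ℝ (Fin d) → EuclideanSpace ℝ (Fin d))
      (D2φ : ℝ → EuclideanSpace ℝ (Fin d) → Matrix (Fin d) (Fin d) ℝ),
      IsC12 d φ φt Dφ D2φ →
      ∀ t₀ ∈ Ico (0 : ℝ) T, ∀ x₀ ∈ closure 𝒪,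
        IsLocalMaxOn (fun z : ℝ × EuclideanSpace ℝ (Fin d) => w₁ z.1 z.2 - φ z.1 z.2)
          (Icc 0 T ×ˢ closure 𝒪) (t₀, x₀) →
        ρ * w₁ t₀ x₀ - φt t₀ x₀ + H x₀ (Dφ t₀ x₀) (D2φ t₀ x₀) ≤ 0)
    -- `w₂` is a viscosity supersolution on `𝒪` of the same equation
    (hsuper : ∀ (φ φt : ℝ → EuclideanSpace ℝ (Fin d) → ℝ)
      (Dφ : ℝ → EuclideanSpace ℝ (Fin d) → EuclideanSpace ℝ (Fin d))
      (D2φ : ℝ → EuclideanSpace ℝ (Fin d) → Matrix (Fin d) (Fin d) ℝ),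
      IsC12 d φ φt Dφ D2φ →
      ∀ t₀ ∈ Ico (0 : ℝ) T, ∀ x₀ ∈ 𝒪,
        IsLocalMinOn (fun z : ℝ × EuclideanSpace ℝ (Fin d) => w₂ z.1 z.2 - φ z.1 z.2)
          (Icc 0 T ×ˢ 𝒪) (t₀, x₀) →
        0 ≤ ρ * w₂ t₀ x₀ - φt t₀ x₀ + H x₀ (Dφ t₀ x₀) (D2φ t₀ x₀))
    -- polynomial growth
    (hw₁growth : ∃ (C : ℝ) (p : ℕ), ∀ t ∈ Icc 0 T, ∀ x ∈ closure 𝒪,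
      |w₁ t x| ≤ C * (1 + ‖x‖ ^ p))
    (hw₂growth : ∃ (C : ℝ) (p : ℕ), ∀ t ∈ Icc 0 T, ∀ x ∈ closure 𝒪,
      |w₂ t x| ≤ C * (1 + ‖x‖ ^ p))
    -- `w₂` is of class `𝓡(𝒪)`
    (hw₂R : ClassR d T 𝒪 w₂)
    -- comparison at the terminal time
    (hterm : ∀ x ∈ closure 𝒪, w₁ T x ≤ w₂ T x) :
    ∀ t ∈ Icc 0 T, ∀ x ∈ closure 𝒪, w₁ t x ≤ w₂ t x :=
  stmt16_general d 𝒪 h𝒪 T ρ hρ H Hcont HA1 w₁ w₂ hw₁usc hw₂lsc hsub hsuper hw₁growth hw₂growth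
    hw₂R hterm

end
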